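/- For every TS-module M of finite length and every smooth character χ of T, the χ-coinvariants M_{T,χ} and the χ-eigenspace M^{T,χ} are finite-dimensional and dim M_{T,χ} − dim M^{T,χ} = deg(M), where deg(M) is the number of Jordan–Hölder constituents of M isomorphic to 𝕊. -/

import Mathlib

noncomputable section

open scoped Classical

namespace PSW

/-! ### The affine group `λ.b : x ↦ λ·x + b` over a field `K`. -/

@[ext]
structure Aff (K : Type*) [Field K] where
  t : Kˣ
  s : K

namespace Aff

variable {K : Type*} [Field K]

instance : Mul (Aff K) := ⟨fun g h => ⟨g.t * h.t, g.s + (g.t : K) * h.s⟩⟩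
instance : One (Aff K) := ⟨⟨1, 0⟩⟩
instance : Inv (Aff K) := ⟨fun g => ⟨g.t⁻¹, -(((g.t⁻¹ : Kˣ) : K) * g.s)⟩⟩

@[simp] lemma mul_t (g h : Aff K) : (g * h).t = g.t * h.t := rfl
@[simp] lemma mul_s (g h : Aff K) : (g * h).s = g.s + (g.t : K) * h.s := rfl
@[simp] lemma one_t : (1 : Aff K).t = 1 := rfl
@[simp] lemma one_s : (1 : Aff K).s = 0 := rfl
@[simp] lemma inv_t (g : Aff K) : (g⁻¹).t = g.t⁻¹ := rfl
@[simp] lemma inv_s (g : Aff K) : (g⁻¹).s = -(((g.t⁻¹ : Kˣ) : K) * g.s) := rfl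

instance : Group (Aff K) where
  mul_assoc a b c := by
    ext
    · simp [mul_assoc]
    · simp only [mul_s, mul_t, Units.val_mul]; ring
  one_mul a := by ext <;> simp
  mul_one a := by ext <;> simp
  inv_mul_cancel a := by
    ext
    · simp
    · simp

/-- The element `x_λ` of the group `TS`. -/
def xT (u : Kˣ) : Aff K := ⟨u, 0⟩

/-- The element `s_b` of the group `TS`. -/
def sS (b : K) : Aff K := ⟨1, b⟩

@[simp] lemma xT_t (u : Kˣ) : (xT u : Aff K).t = u := rfl
@[simp] lemma xT_s (u : Kˣ) : (xT u : Aff K).s = 0 := rfl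
@[simp] lemma sS_t (b : K) : (sS b : Aff K).t = 1 := rfl
@[simp] lemma sS_s (b : K) : (sS b : Aff K).s = b := rfl

/-- `T ≅ k^×` as a subgroup of `TS`. -/
def xTHom : Kˣ →* Aff K where
  toFun := xT
  map_one' := rfl
  map_mul' u v := by ext <;> simp [xT]

@[simp] lemma xTHom_apply (u : Kˣ) : (xTHom u : Aff K) = xT u := rfl

lemma mul_sS (g : Aff K) (b : K) : g * sS b = sS ((g.t : K) * b) * g := by
  ext
  · simp
  · simp [add_comm]

lemma sS_mul (b : K) (g : Aff K) : sS b * g = g * sS (((g.t⁻¹ : Kˣ) : K) * b) := by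
  ext
  · simp
  · simp [Units.mul_inv_cancel_left, add_comm]

lemma aff_decomp (g : Aff K) : g = xT g.t * sS (((g.t⁻¹ : Kˣ) : K) * g.s) := by
  ext
  · simp
  · simp [Units.mul_inv_cancel_left]

instance [TopologicalSpace K] : TopologicalSpace (Aff K) :=
  TopologicalSpace.induced (fun g : Aff K => ((g.t, g.s) : Kˣ × K)) inferInstance

end Aff

/-! ### Generalities on representations of a monoid on complex vector spaces. -/

namespace GRep

variable {G : Type*} [Monoid G]

section MonoidModules

variable {V W : Type*} [AddCommMonoid V] [Module ℂ V] [AddCommMonoid W] [Module ℂ W]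

/-- A submodule invariant under the representation. -/
def Invariant (ρ : Representation ℂ G V) (U : Submodule ℂ V) : Prop :=
  ∀ (g : G) (v : V), v ∈ U → ρ g v ∈ U

/-- Equivariance of a linear map with respect to two representations. -/
def Equivariant (ρ : Representation ℂ G V) (σ : Representation ℂ G W) (f : V →ₗ[ℂ] W) : Prop :=
  ∀ (g : G) (v : V), f (ρ g v) = σ g (f v)

/-- Isomorphism of representations. -/
def Iso (ρ : Representation ℂ G V) (σ : Representation ℂ G W) : Prop :=
  ∃ e : V ≃ₗ[ℂ] W, ∀ (g : G) (v : V), e (ρ g v) = σ g (e v)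

/-- Irreducibility. -/
def Irred (ρ : Representation ℂ G V) : Prop :=
  Nontrivial V ∧ ∀ U : Submodule ℂ V, Invariant ρ U → U = ⊥ ∨ U = ⊤

/-- Subrepresentation on an invariant submodule. -/
def sub (ρ : Representation ℂ G V) {U : Submodule ℂ V} (hU : Invariant ρ U) :
    Representation ℂ G ↥U where
  toFun g := (ρ g).restrict fun v hv => hU g v hv
  map_one' := by
    apply LinearMap.ext; intro v; apply Subtype.ext
    simp [LinearMap.restrict_apply]
  map_mul' g h := by
    apply LinearMap.ext; intro v; apply Subtype.ext
    simp [LinearMap.restrict_apply]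

@[simp] lemma sub_apply (ρ : Representation ℂ G V) {U : Submodule ℂ V} (hU : Invariant ρ U)
    (g : G) (v : ↥U) : ((sub ρ hU g v : ↥U) : V) = ρ g (v : V) := rfl

lemma ker_invariant (ρ : Representation ℂ G V) (σ : Representation ℂ G W)
    (f : V →ₗ[ℂ] W) (hf : Equivariant ρ σ f) : Invariant ρ (LinearMap.ker f) := by
  intro g v hv
  rw [LinearMap.mem_ker] at hv ⊢
  rw [hf g v, hv, map_zero]

lemma range_invariant (ρ : Representation ℂ G V) (σ : Representation ℂ G W)
    (f : V →ₗ[ℂ] W) (hf : Equivariant ρ σ f) : Invariant σ (LinearMap.range f) := by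
  rintro g w ⟨v, rfl⟩
  exact ⟨ρ g v, hf g v⟩

lemma map_invariant (ρ : Representation ℂ G V) (σ : Representation ℂ G W)
    (f : V →ₗ[ℂ] W) (hf : Equivariant ρ σ f) (U : Submodule ℂ V) (hU : Invariant ρ U) :
    Invariant σ (U.map f) := by
  rintro g w ⟨v, hv, rfl⟩
  exact ⟨ρ g v, hU g v hv, hf g v⟩

end MonoidModules

section GroupModules

variable {V W : Type*} [AddCommGroup V] [Module ℂ V] [AddCommGroup W] [Module ℂ W]

/-- Quotient representation. -/
def quot (ρ : Representation ℂ G V) (U : Submodule ℂ V) (hU : Invariant ρ U) :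
    Representation ℂ G (V ⧸ U) where
  toFun g := U.mapQ U (ρ g) fun v hv => hU g v hv
  map_one' := by
    apply LinearMap.ext; intro x
    obtain ⟨v, rfl⟩ := Submodule.Quotient.mk_surjective U x
    simp [Submodule.mapQ_apply]
  map_mul' g h := by
    apply LinearMap.ext; intro x
    obtain ⟨v, rfl⟩ := Submodule.Quotient.mk_surjective U x
    simp [Submodule.mapQ_apply]

@[simp] lemma quot_apply (ρ : Representation ℂ G V) (U : Submodule ℂ V) (hU : Invariant ρ U)
    (g : G) (v : V) :
    quot ρ U hU g (Submodule.Quotient.mk v) = Submodule.Quotient.mk (ρ g v) := rfl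

/-- Subquotient representation on `B/A`. -/
def subquot (ρ : Representation ℂ G V) {A B : Submodule ℂ V}
    (hA : Invariant ρ A) (hB : Invariant ρ B) :
    Representation ℂ G (↥B ⧸ A.comap B.subtype) :=
  quot (sub ρ hB) (A.comap B.subtype) fun g v hv => hA g v.1 hv

lemma mkQ_equivariant (ρ : Representation ℂ G V) (U : Submodule ℂ V) (hU : Invariant ρ U) :
    Equivariant ρ (quot ρ U hU) U.mkQ := by
  intro g v
  show Submodule.Quotient.mk (ρ g v) = quot ρ U hU g (Submodule.Quotient.mk v)
  rw [quot_apply]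

end GroupModules

end GRep

/-! ### TS-modules: representations of the affine group. -/

/-- A `TS`-module structure on `V` is a representation of the group `TS ≅ Gl_a(1)`. -/
abbrev Rep (K : Type*) [Field K] (V : Type*) [AddCommGroup V] [Module ℂ V] :=
  Representation ℂ (Aff K) V

section RepDefs

open Aff

variable {K : Type*} [Field K]
variable {V W : Type*} [AddCommGroup V] [Module ℂ V] [AddCommGroup W] [Module ℂ W]

/-- Smoothness: every vector has open stabilizer. -/
def IsSmoothRep [TopologicalSpace K] (ρ : Rep K V) : Prop :=
  ∀ v : V, IsOpen {g : Aff K | ρ g v = v}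

/-- Smoothness of a `T`-module, i.e. of a representation of `T ≅ k^×`. -/
def TIsSmooth {X : Type*} [AddCommMonoid X] [Module ℂ X] [TopologicalSpace K]
    (τ : Representation ℂ Kˣ X) : Prop :=
  ∀ x : X, IsOpen {u : Kˣ | τ u x = x}

/-- Smooth character of `T ≅ k^×` (open kernel, equivalently locally constant). -/
def SmoothMulChar [TopologicalSpace K] (χ : Kˣ →* ℂˣ) : Prop :=
  IsOpen {u : Kˣ | χ u = 1}

/-- The space `V^S` of `S`-invariants. -/
def sInv (ρ : Rep K V) : Submodule ℂ V where
  carrier := {v | ∀ b : K, ρ (sS b) v = v}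
  zero_mem' := fun b => map_zero _
  add_mem' {a b} ha hb := fun c => by rw [map_add, ha c, hb c]
  smul_mem' c v hv := fun b => by rw [map_smul, hv b]

@[simp] lemma mem_sInv (ρ : Rep K V) (v : V) :
    v ∈ sInv ρ ↔ ∀ b : K, ρ (sS b) v = v := Iff.rfl

/-- The `χ`-eigenspace `X^{T,χ}` of a `T`-module. -/
def tEigenT {X : Type*} [AddCommMonoid X] [Module ℂ X]
    (τ : Representation ℂ Kˣ X) (χ : Kˣ →* ℂˣ) : Submodule ℂ X where
  carrier := {x | ∀ u : Kˣ, τ u x = (χ u : ℂ) • x}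
  zero_mem' := fun u => by simp
  add_mem' {a b} ha hb := fun u => by rw [map_add, ha u, hb u, smul_add]
  smul_mem' c x hx := fun u => by rw [map_smul, hx u]; exact smul_comm c ((χ u : ℂ)) x

@[simp] lemma mem_tEigenT {X : Type*} [AddCommMonoid X] [Module ℂ X]
    (τ : Representation ℂ Kˣ X) (χ : Kˣ →* ℂˣ) (x : X) :
    x ∈ tEigenT τ χ ↔ ∀ u : Kˣ, τ u x = (χ u : ℂ) • x := Iff.rfl

/-- The `χ`-eigenspace `V^{T,χ}` of a `TS`-module. -/
def tEigen (ρ : Rep K V) (χ : Kˣ →* ℂˣ) : Submodule ℂ V := tEigenT (ρ.comp xTHom) χ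

/-- The kernel of the projection to the `S`-coinvariants `V_S`. -/
def sCoinvKer (ρ : Rep K V) : Submodule ℂ V :=
  Submodule.span ℂ {w : V | ∃ (b : K) (v : V), w = ρ (sS b) v - v}

/-- The kernel of the projection to the twisted coinvariants `V_{S,ψ'}`. -/
def sTwistKer (ρ : Rep K V) (ψ' : AddChar K ℂ) : Submodule ℂ V :=
  Submodule.span ℂ {w : V | ∃ (b : K) (v : V), w = ρ (sS b) v - ψ' b • v}

/-- The kernel of the projection to the `χ`-coinvariants `X_{T,χ}` of a `T`-module. -/
def tTwistKerT {X : Type*} [AddCommGroup X] [Module ℂ X]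
    (τ : Representation ℂ Kˣ X) (χ : Kˣ →* ℂˣ) : Submodule ℂ X :=
  Submodule.span ℂ {w : X | ∃ (u : Kˣ) (x : X), w = τ u x - (χ u : ℂ) • x}

/-- The kernel of the projection to the `χ`-coinvariants `V_{T,χ}` of a `TS`-module. -/
def tTwistKer (ρ : Rep K V) (χ : Kˣ →* ℂˣ) : Submodule ℂ V := tTwistKerT (ρ.comp xTHom) χ

lemma sCoinvKer_invariant (ρ : Rep K V) : GRep.Invariant ρ (sCoinvKer ρ) := by
  intro g v hv
  have h : sCoinvKer ρ ≤ Submodule.comap (ρ g) (sCoinvKer ρ) := by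
    refine Submodule.span_le.2 ?_
    rintro w ⟨b, v', rfl⟩
    simp only [SetLike.mem_coe, Submodule.mem_comap, map_sub]
    have h1 : ρ g (ρ (sS b) v') = ρ (sS ((g.t : K) * b)) (ρ g v') := by
      rw [← Module.End.mul_apply, ← map_mul, mul_sS, map_mul, Module.End.mul_apply]
    rw [h1]
    exact Submodule.subset_span ⟨(g.t : K) * b, ρ g v', rfl⟩
  exact h hv

lemma sInv_invariant (ρ : Rep K V) : GRep.Invariant ρ (sInv ρ) := by
  intro g v hv
  rw [mem_sInv] at hv ⊢
  intro b
  have h1 : ρ (sS b) (ρ g v) = ρ g (ρ (sS (((g.t⁻¹ : Kˣ) : K) * b)) v) := by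
    rw [← Module.End.mul_apply, ← map_mul, sS_mul, map_mul, Module.End.mul_apply]
  rw [h1, hv _]

/-- The `S`-coinvariants `π₀(V) = V_S` as a `TS`-module (`S` acting trivially). -/
def piZeroRep (ρ : Rep K V) : Rep K (V ⧸ sCoinvKer ρ) :=
  GRep.quot ρ (sCoinvKer ρ) (sCoinvKer_invariant ρ)

/-- The `S`-coinvariants `π₀(V) = V_S` as a `T`-module. -/
def piZeroT (ρ : Rep K V) : Representation ℂ Kˣ (V ⧸ sCoinvKer ρ) :=
  (piZeroRep ρ).comp xTHom

/-- The `T`-module structure on `κ(V) = V^S`. -/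
def sInvT (ρ : Rep K V) : Representation ℂ Kˣ ↥(sInv ρ) :=
  (GRep.sub ρ (sInv_invariant ρ)).comp xTHom

/-- A `TS`-module is perfect if all its eigenspaces `V^{T,χ}` for smooth `χ` vanish. -/
def Perfect [TopologicalSpace K] (ρ : Rep K V) : Prop :=
  ∀ χ : Kˣ →* ℂˣ, SmoothMulChar χ → tEigen ρ χ = ⊥

/-- A finite-dimensional `T`-module is cyclic if each generalized eigenspace is a single
Jordan block; equivalently all eigenspaces `X^{T,χ}` have dimension at most one. -/
def TCyclic {X : Type*} [AddCommGroup X] [Module ℂ X]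
    (τ : Representation ℂ Kˣ X) : Prop :=
  ∀ χ : Kˣ →* ℂˣ, Module.finrank ℂ ↥(tEigenT τ χ) ≤ 1

lemma sCoinvKer_le_comap (ρ : Rep K V) (σ : Rep K W)
    (f : V →ₗ[ℂ] W) (hf : GRep.Equivariant ρ σ f) :
    sCoinvKer ρ ≤ (sCoinvKer σ).comap f := by
  refine Submodule.span_le.2 ?_
  rintro w ⟨b, v, rfl⟩
  simp only [SetLike.mem_coe, Submodule.mem_comap, map_sub]
  rw [hf]
  exact Submodule.subset_span ⟨b, f v, rfl⟩

/-- The map induced by an equivariant map on the `S`-coinvariants `π₀`. -/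
def piZeroMap (ρ : Rep K V) (σ : Rep K W) (f : V →ₗ[ℂ] W) (hf : GRep.Equivariant ρ σ f) :
    (V ⧸ sCoinvKer ρ) →ₗ[ℂ] (W ⧸ sCoinvKer σ) :=
  Submodule.mapQ _ _ f (sCoinvKer_le_comap ρ σ f hf)

lemma piZeroMap_equivariant (ρ : Rep K V) (σ : Rep K W) (f : V →ₗ[ℂ] W)
    (hf : GRep.Equivariant ρ σ f) :
    GRep.Equivariant (piZeroRep ρ) (piZeroRep σ) (piZeroMap ρ σ f hf) := by
  intro g x
  obtain ⟨v, rfl⟩ := Submodule.Quotient.mk_surjective _ x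
  show piZeroMap ρ σ f hf (piZeroRep ρ g (Submodule.Quotient.mk v))
      = piZeroRep σ g (piZeroMap ρ σ f hf (Submodule.Quotient.mk v))
  rw [show piZeroRep ρ g (Submodule.Quotient.mk v) = Submodule.Quotient.mk (ρ g v) from rfl]
  rw [show piZeroMap ρ σ f hf (Submodule.Quotient.mk v) = Submodule.Quotient.mk (f v) from rfl]
  rw [show piZeroMap ρ σ f hf (Submodule.Quotient.mk (ρ g v))
      = Submodule.Quotient.mk (f (ρ g v)) from rfl]
  rw [show piZeroRep σ g (Submodule.Quotient.mk (f v)) = Submodule.Quotient.mk (σ g (f v)) from rfl]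
  rw [hf]

lemma kappaImg_invariant (ρ : Rep K V) :
    GRep.Invariant (piZeroT ρ) ((sInv ρ).map (sCoinvKer ρ).mkQ) := by
  rintro u w ⟨v, hv, rfl⟩
  refine ⟨ρ (xT u) v, sInv_invariant ρ (xT u) v hv, ?_⟩
  rfl

end RepDefs

/-! ### Composition series and degree. -/

/-- A composition series for a `TS`-module, witnessing finite length: a maximal chain of
invariant submodules (the subquotients are then irreducible). -/
structure CompSeries {K : Type*} [Field K] {V : Type*} [AddCommGroup V] [Module ℂ V]
    (ρ : Rep K V) where
  n : ℕ
  W : ℕ → Submodule ℂ V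
  bot : W 0 = ⊥
  top : W n = ⊤
  inv : ∀ i, GRep.Invariant ρ (W i)
  lt : ∀ i < n, W i < W (i + 1)
  maximal : ∀ i < n, ∀ C : Submodule ℂ V, GRep.Invariant ρ C → W i ≤ C → C ≤ W (i + 1) →
    C = W i ∨ C = W (i + 1)

/-- The number of Jordan–Hölder constituents of a composition series isomorphic to a given
representation `σ` (applied with `σ = 𝕊`, this is the degree). -/
def CompSeries.deg {K : Type*} [Field K] {V : Type*} [AddCommGroup V] [Module ℂ V]
    {ρ : Rep K V} (c : CompSeries ρ) {W₀ : Type*} [AddCommMonoid W₀] [Module ℂ W₀]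
    (σ : Representation ℂ (Aff K) W₀) : ℕ :=
  (Finset.univ.filter fun i : Fin c.n =>
    GRep.Iso (GRep.subquot ρ (c.inv i.1) (c.inv (i.1 + 1))) σ).card

/-! ### Fiber products of a `T`-module with a `TS`-module over a `T`-module. -/

section Fiber

open Aff

variable {K : Type*} [Field K]
variable {X Y E : Type*} [AddCommGroup X] [Module ℂ X] [AddCommGroup Y] [Module ℂ Y]
  [AddCommGroup E] [Module ℂ E]

/-- The product `TS`-module `X × E` where `S` acts trivially on the `T`-module `X`. -/
def prodRepTE (τ : Representation ℂ Kˣ X) (ρ : Rep K E) : Rep K (X × E) where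
  toFun g := (τ g.t).prodMap (ρ g)
  map_one' := by
    apply LinearMap.ext; rintro ⟨x, v⟩
    simp
  map_mul' g h := by
    apply LinearMap.ext; rintro ⟨x, v⟩
    simp [map_mul]

/-- The underlying space of the fiber product `𝔼[f] = X ×_Y E`. -/
def fiberKer (f : X →ₗ[ℂ] Y) (q : E →ₗ[ℂ] Y) : Submodule ℂ (X × E) :=
  LinearMap.ker (f.comp (LinearMap.fst ℂ X E) - q.comp (LinearMap.snd ℂ X E))

lemma mem_fiberKer (f : X →ₗ[ℂ] Y) (q : E →ₗ[ℂ] Y) (p : X × E) :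
    p ∈ fiberKer f q ↔ f p.1 = q p.2 := by
  simp [fiberKer, sub_eq_zero]

lemma fiber_invariant (τX : Representation ℂ Kˣ X) (ρE : Rep K E)
    (τY : Representation ℂ Kˣ Y) (f : X →ₗ[ℂ] Y) (q : E →ₗ[ℂ] Y)
    (hf : ∀ (u : Kˣ) (x : X), f (τX u x) = τY u (f x))
    (hq : sCoinvKer ρE ≤ LinearMap.ker q)
    (hqT : ∀ (u : Kˣ) (v : E), q (ρE (xT u) v) = τY u (q v)) :
    GRep.Invariant (prodRepTE τX ρE) (fiberKer f q) := by
  intro g p hp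
  rw [mem_fiberKer] at hp ⊢
  have hsb : q (ρE (sS (((g.t⁻¹ : Kˣ) : K) * g.s)) p.2) = q p.2 := by
    have h1 : ρE (sS (((g.t⁻¹ : Kˣ) : K) * g.s)) p.2 - p.2 ∈ sCoinvKer ρE :=
      Submodule.subset_span ⟨_, _, rfl⟩
    have h2 := hq h1
    rw [LinearMap.mem_ker, map_sub, sub_eq_zero] at h2
    exact h2
  have hdecomp : ρE g p.2 = ρE (xT g.t) (ρE (sS (((g.t⁻¹ : Kˣ) : K) * g.s)) p.2) := by
    conv_lhs => rw [aff_decomp g]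
    rw [map_mul, Module.End.mul_apply]
  have h1 : ((prodRepTE τX ρE) g p).1 = τX g.t p.1 := rfl
  have h2 : ((prodRepTE τX ρE) g p).2 = ρE g p.2 := rfl
  rw [h1, h2, hf, hp, hdecomp, hqT, hsb]

end Fiber

/-! ### Jordan blocks of finite-dimensional `T`-modules. -/

section Jordan

variable {K : Type*} [Field K]
variable {X : Type*} [AddCommGroup X] [Module ℂ X]

/-- A Jordan block of a `T`-module: a nonzero indecomposable invariant direct summand. -/
def IsJordanBlock (τ : Representation ℂ Kˣ X) (J : Submodule ℂ X) : Prop :=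
  J ≠ ⊥ ∧ GRep.Invariant τ J ∧ (∃ C : Submodule ℂ X, GRep.Invariant τ C ∧ IsCompl J C) ∧
    ∀ A B : Submodule ℂ X, GRep.Invariant τ A → GRep.Invariant τ B → A ≤ J → B ≤ J →
      A ⊓ B = ⊥ → A ⊔ B = J → A = ⊥ ∨ B = ⊥

end Jordan

/-! ### Invariants and coinvariants for a normal subgroup of an arbitrary group. -/

section Grp

variable {Γ : Type*} [Group Γ]
variable {V W : Type*} [AddCommGroup V] [Module ℂ V] [AddCommGroup W] [Module ℂ W]

/-- Invariants `V^N` under a subgroup `N`. -/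
def grpInv (ρ : Representation ℂ Γ V) (N : Subgroup Γ) : Submodule ℂ V where
  carrier := {v | ∀ n ∈ N, ρ n v = v}
  zero_mem' := fun n _ => map_zero _
  add_mem' {a b} ha hb := fun n hn => by rw [map_add, ha n hn, hb n hn]
  smul_mem' c v hv := fun n hn => by rw [map_smul, hv n hn]

@[simp] lemma mem_grpInv (ρ : Representation ℂ Γ V) (N : Subgroup Γ) (v : V) :
    v ∈ grpInv ρ N ↔ ∀ n ∈ N, ρ n v = v := Iff.rfl

/-- The kernel of the projection to the coinvariants `V_N` under a subgroup `N`. -/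
def grpCoinvKer (ρ : Representation ℂ Γ V) (N : Subgroup Γ) : Submodule ℂ V :=
  Submodule.span ℂ {w : V | ∃ n ∈ N, ∃ v : V, w = ρ n v - v}

lemma grpInv_invariant (ρ : Representation ℂ Γ V) (N : Subgroup Γ) [hN : N.Normal] :
    GRep.Invariant ρ (grpInv ρ N) := by
  intro γ v hv
  rw [mem_grpInv] at hv ⊢
  intro n hn
  have hmem : γ⁻¹ * n * γ ∈ N := by
    have := hN.conj_mem n hn γ⁻¹
    simpa using this
  have key : ρ n (ρ γ v) = ρ γ (ρ (γ⁻¹ * n * γ) v) := by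
    rw [← Module.End.mul_apply, ← map_mul, ← Module.End.mul_apply, ← map_mul]
    congr 1
    group
  rw [key, hv _ hmem]

lemma grpCoinvKer_invariant (ρ : Representation ℂ Γ V) (N : Subgroup Γ) [hN : N.Normal] :
    GRep.Invariant ρ (grpCoinvKer ρ N) := by
  intro γ v hv
  have h : grpCoinvKer ρ N ≤ Submodule.comap (ρ γ) (grpCoinvKer ρ N) := by
    refine Submodule.span_le.2 ?_
    rintro w ⟨n, hn, v', rfl⟩
    simp only [SetLike.mem_coe, Submodule.mem_comap, map_sub]
    have key : ρ γ (ρ n v') = ρ (γ * n * γ⁻¹) (ρ γ v') := by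
      rw [← Module.End.mul_apply, ← map_mul, ← Module.End.mul_apply, ← map_mul]
      congr 1
      group
    rw [key]
    exact Submodule.subset_span ⟨γ * n * γ⁻¹, hN.conj_mem n hn γ, ρ γ v', rfl⟩
  exact h hv

/-- The map induced on `N`-invariants by an equivariant map. -/
def grpInvRestrict (ρ : Representation ℂ Γ V) (σ : Representation ℂ Γ W) (N : Subgroup Γ)
    (f : V →ₗ[ℂ] W) (hf : GRep.Equivariant ρ σ f) : ↥(grpInv ρ N) →ₗ[ℂ] ↥(grpInv σ N) :=
  f.restrict (fun v hv => by
    rw [mem_grpInv] at hv ⊢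
    intro n hn
    rw [← hf n v, hv n hn])

lemma grpCoinvKer_le_comap (ρ : Representation ℂ Γ V) (σ : Representation ℂ Γ W) (N : Subgroup Γ)
    (f : V →ₗ[ℂ] W) (hf : GRep.Equivariant ρ σ f) :
    grpCoinvKer ρ N ≤ (grpCoinvKer σ N).comap f := by
  refine Submodule.span_le.2 ?_
  rintro w ⟨n, hn, v, rfl⟩
  simp only [SetLike.mem_coe, Submodule.mem_comap, map_sub]
  rw [hf]
  exact Submodule.subset_span ⟨n, hn, f v, rfl⟩

/-- The map induced on `N`-coinvariants by an equivariant map. -/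
def grpCoinvMap (ρ : Representation ℂ Γ V) (σ : Representation ℂ Γ W) (N : Subgroup Γ)
    (f : V →ₗ[ℂ] W) (hf : GRep.Equivariant ρ σ f) :
    (V ⧸ grpCoinvKer ρ N) →ₗ[ℂ] (W ⧸ grpCoinvKer σ N) :=
  Submodule.mapQ _ _ f (grpCoinvKer_le_comap ρ σ N f hf)

end Grp

/-! ### Tate L-factors of finite-dimensional `T`-modules. -/

section Lfactor

variable {K : Type*} [NontriviallyNormedField K]
variable {X : Type*} [AddCommGroup X] [Module ℂ X]

/-- The part of a `T`-module where the `χ`-twisted action is unramified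
(trivial on the norm-one units). -/
def unrPart (τ : Representation ℂ Kˣ X) (χ : Kˣ →* ℂˣ) : Submodule ℂ X where
  carrier := {x | ∀ u : Kˣ, ‖(u : K)‖ = 1 → (χ u : ℂ) • τ u x = x}
  zero_mem' := fun u _ => by simp
  add_mem' {a b} ha hb := fun u hu => by rw [map_add, smul_add, ha u hu, hb u hu]
  smul_mem' c x hx := fun u hu => by
    rw [map_smul, smul_comm, hx u hu]

lemma unrPart_stable (τ : Representation ℂ Kˣ X) (χ : Kˣ →* ℂˣ) (ϖ : Kˣ) :
    ∀ x ∈ unrPart τ χ, ((χ ϖ : ℂ) • τ ϖ) x ∈ unrPart τ χ := by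
  intro x hx u hu
  have comm : τ u (τ ϖ x) = τ ϖ (τ u x) := by
    rw [← Module.End.mul_apply, ← map_mul, mul_comm, map_mul, Module.End.mul_apply]
  calc (χ u : ℂ) • τ u (((χ ϖ : ℂ) • τ ϖ) x)
      = (χ ϖ : ℂ) • ((χ u : ℂ) • τ u (τ ϖ x)) := by
        rw [LinearMap.smul_apply, map_smul, smul_comm]
    _ = (χ ϖ : ℂ) • τ ϖ ((χ u : ℂ) • τ u x) := by rw [comm, map_smul]
    _ = ((χ ϖ : ℂ) • τ ϖ) x := by rw [hx u hu, LinearMap.smul_apply]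

/-- The twisted uniformizer action on the unramified part. -/
def twistOp (τ : Representation ℂ Kˣ X) (χ : Kˣ →* ℂˣ) (ϖ : Kˣ) :
    ↥(unrPart τ χ) →ₗ[ℂ] ↥(unrPart τ χ) :=
  LinearMap.restrict ((χ ϖ : ℂ) • τ ϖ) (unrPart_stable τ χ ϖ)

/-- The Tate `L`-factor `L(s, χ ⊗ X) = det(1 - q^{-s}·(χ·τ)(ϖ) | X^{unr,χ})⁻¹` of a
(finite-dimensional) `T`-module `X`, relative to a uniformizer `ϖ`. -/
def Lfactor (τ : Representation ℂ Kˣ X) (χ : Kˣ →* ℂˣ) (ϖ : Kˣ) (s : ℂ) : ℂ :=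
  (LinearMap.det (LinearMap.id - (‖(ϖ : K)‖ : ℂ) ^ s • twistOp τ χ ϖ))⁻¹

end Lfactor

/-! ### The concrete `TS`-modules `𝕊`, `C_c^∞(k)`, `C_b^∞(k^×)` and `𝔼[χ]`. -/

section Concrete

open Aff

variable (K : Type*) [NontriviallyNormedField K]

/-- The representation of `TS` on functions on `k^×`:
`(s_b g)(x) = ψ(bx) g(x)`, `(x_λ g)(x) = g(xλ)`. -/
def repCx (ψ : AddChar K ℂ) : Rep K (Kˣ → ℂ) where
  toFun g :=
    { toFun := fun f x => ψ (g.s * (x : K)) * f (x * g.t)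
      map_add' := fun f₁ f₂ => by funext x; simp [mul_add]
      map_smul' := fun c f => by
        funext x
        simp only [Pi.smul_apply, smul_eq_mul, RingHom.id_apply]
        ring }
  map_one' := by
    apply LinearMap.ext; intro f; funext x
    simp
  map_mul' g h := by
    apply LinearMap.ext; intro f; funext x
    show ψ ((g.s + (g.t : K) * h.s) * (x : K)) * f (x * (g.t * h.t))
        = ψ (g.s * (x : K)) * (ψ (h.s * ((x * g.t : Kˣ) : K)) * f (x * g.t * h.t))
    have harg : (g.s + (g.t : K) * h.s) * (x : K)
        = g.s * (x : K) + h.s * ((x * g.t : Kˣ) : K) := by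
      push_cast
      ring
    rw [harg, AddChar.map_add_eq_mul, ← mul_assoc x g.t h.t]
    ring

@[simp] lemma repCx_apply (ψ : AddChar K ℂ) (g : Aff K) (f : Kˣ → ℂ) (x : Kˣ) :
    repCx K ψ g f x = ψ (g.s * (x : K)) * f (x * g.t) := rfl

/-- The `χ`-twisted representation of `TS` on functions on `k`:
`(s_b g)(x) = ψ(bx) g(x)`, `(x_λ g)(x) = χ(λ) g(xλ)`.  (Take `χ = 1` for the
untwisted action on `C_c^∞(k)`; the module `𝔼[χ]` is `C_c^∞(k)` with the twisted action.) -/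
def repCc (ψ : AddChar K ℂ) (χ : Kˣ →* ℂˣ) : Rep K (K → ℂ) where
  toFun g :=
    { toFun := fun f x => (χ g.t : ℂ) * ψ (g.s * x) * f (x * (g.t : K))
      map_add' := fun f₁ f₂ => by funext x; simp [mul_add]
      map_smul' := fun c f => by
        funext x
        simp only [Pi.smul_apply, smul_eq_mul, RingHom.id_apply]
        ring }
  map_one' := by
    apply LinearMap.ext; intro f; funext x
    simp
  map_mul' g h := by
    apply LinearMap.ext; intro f; funext x
    show (χ (g.t * h.t) : ℂ) * ψ ((g.s + (g.t : K) * h.s) * x) * f (x * ((g.t * h.t : Kˣ) : K))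
        = (χ g.t : ℂ) * ψ (g.s * x) * ((χ h.t : ℂ) * ψ (h.s * (x * (g.t : K)))
            * f (x * (g.t : K) * (h.t : K)))
    have harg : (g.s + (g.t : K) * h.s) * x = g.s * x + h.s * (x * (g.t : K)) := by ring
    have harg2 : x * ((g.t * h.t : Kˣ) : K) = x * (g.t : K) * (h.t : K) := by
      push_cast
      ring
    rw [harg, harg2, AddChar.map_add_eq_mul, map_mul]
    push_cast
    ring

@[simp] lemma repCc_apply (ψ : AddChar K ℂ) (χ : Kˣ →* ℂˣ) (g : Aff K) (f : K → ℂ) (x : K) :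
    repCc K ψ χ g f x = (χ g.t : ℂ) * ψ (g.s * x) * f (x * (g.t : K)) := rfl

/-- The one-dimensional `TS`-module `ℂ_χ` on which `S` acts trivially and `x_λ` by `χ(λ)`. -/
def chiRep (χ : Kˣ →* ℂˣ) : Rep K ℂ where
  toFun g := (χ g.t : ℂ) • LinearMap.id
  map_one' := by
    apply LinearMap.ext; intro c
    simp
  map_mul' g h := by
    apply LinearMap.ext; intro c
    simp only [mul_t, map_mul, LinearMap.smul_apply, LinearMap.id_apply, Module.End.mul_apply,
      Units.val_mul, smul_eq_mul]
    ring

/-- `C_c^∞(k)`: locally constant, compactly supported functions on `k`. -/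
def CcK : Submodule ℂ (K → ℂ) where
  carrier := {f | IsLocallyConstant f ∧ HasCompactSupport f}
  zero_mem' := ⟨IsLocallyConstant.const 0, by
    rw [hasCompactSupport_def]
    simp⟩
  add_mem' {a b} ha hb := ⟨ha.1.comp₂ hb.1 (· + ·), ha.2.add hb.2⟩
  smul_mem' c f hf := by
    refine ⟨?_, hf.2.mono (Function.support_const_smul_subset c f)⟩
    exact hf.1.comp (fun z => c * z)

@[simp] lemma mem_CcK (f : K → ℂ) :
    f ∈ CcK K ↔ IsLocallyConstant f ∧ HasCompactSupport f := Iff.rfl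

/-- `𝕊 = C_c^∞(k^×)`: locally constant, compactly supported functions on `k^×`. -/
def SSx : Submodule ℂ (Kˣ → ℂ) where
  carrier := {f | IsLocallyConstant f ∧ HasCompactSupport f}
  zero_mem' := ⟨IsLocallyConstant.const 0, by
    rw [hasCompactSupport_def]
    simp⟩
  add_mem' {a b} ha hb := ⟨ha.1.comp₂ hb.1 (· + ·), ha.2.add hb.2⟩
  smul_mem' c f hf := by
    refine ⟨?_, hf.2.mono (Function.support_const_smul_subset c f)⟩
    exact hf.1.comp (fun z => c * z)

@[simp] lemma mem_SSx (f : Kˣ → ℂ) :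
    f ∈ SSx K ↔ IsLocallyConstant f ∧ HasCompactSupport f := Iff.rfl

/-- `C_b^∞(k^×)`: locally constant functions on `k^×` whose support has compact closure
in `k`. -/
def Cb : Submodule ℂ (Kˣ → ℂ) where
  carrier := {f | IsLocallyConstant f ∧
    IsCompact (closure (((↑) : Kˣ → K) '' Function.support f))}
  zero_mem' := ⟨IsLocallyConstant.const 0, by simp⟩
  add_mem' {a b} ha hb := by
    refine ⟨ha.1.comp₂ hb.1 (· + ·), ?_⟩
    refine IsCompact.of_isClosed_subset (ha.2.union hb.2) isClosed_closure ?_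
    refine closure_minimal ?_ (ha.2.isClosed.union hb.2.isClosed)
    refine (Set.image_mono (Function.support_add _ _)).trans ?_
    rw [Set.image_union]
    exact Set.union_subset_union subset_closure subset_closure
  smul_mem' c f hf := by
    refine ⟨hf.1.comp (fun z => c * z), ?_⟩
    refine IsCompact.of_isClosed_subset hf.2 isClosed_closure ?_
    refine closure_mono ?_
    exact Set.image_mono (Function.support_const_smul_subset c f)

@[simp] lemma mem_Cb (f : Kˣ → ℂ) :
    f ∈ Cb K ↔ IsLocallyConstant f ∧
      IsCompact (closure (((↑) : Kˣ → K) '' Function.support f)) := Iff.rfl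

variable {K}

lemma SSx_invariant (ψ : AddChar K ℂ) (hψlc : IsLocallyConstant (⇑ψ)) :
    GRep.Invariant (repCx K ψ) (SSx K) := by
  rintro g f hf
  rw [mem_SSx] at hf ⊢
  obtain ⟨hlc, hcs⟩ := hf
  have heq : repCx K ψ g f
      = (fun x : Kˣ => ψ (g.s * (x : K))) * (f ∘ (Homeomorph.mulRight g.t)) := rfl
  constructor
  · rw [heq]
    refine IsLocallyConstant.mul ?_ ?_
    · exact hψlc.comp_continuous (continuous_const.mul Units.continuous_val)
    · exact hlc.comp_continuous (Homeomorph.mulRight g.t).continuous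
  · rw [heq]
    exact (hcs.comp_homeomorph (Homeomorph.mulRight g.t)).mul_left

lemma CcK_invariant (ψ : AddChar K ℂ) (hψlc : IsLocallyConstant (⇑ψ)) (χ : Kˣ →* ℂˣ) :
    GRep.Invariant (repCc K ψ χ) (CcK K) := by
  rintro g f hf
  rw [mem_CcK] at hf ⊢
  obtain ⟨hlc, hcs⟩ := hf
  have hne : ((g.t : Kˣ) : K) ≠ 0 := g.t.ne_zero
  have heq : repCc K ψ χ g f
      = (fun x : K => (χ g.t : ℂ) * ψ (g.s * x)) * (f ∘ (Homeomorph.mulRight₀ (g.t : K) hne)) :=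
    rfl
  constructor
  · rw [heq]
    refine IsLocallyConstant.mul ?_ ?_
    · exact ((hψlc.comp_continuous (continuous_const.mul continuous_id)).comp
        (fun z => (χ g.t : ℂ) * z))
    · exact hlc.comp_continuous (Homeomorph.mulRight₀ (g.t : K) hne).continuous
  · rw [heq]
    exact (hcs.comp_homeomorph (Homeomorph.mulRight₀ (g.t : K) hne)).mul_left

/-- The `TS`-module `𝕊 = C_c^∞(k^×)`. -/
def SRep (ψ : AddChar K ℂ) (hψlc : IsLocallyConstant (⇑ψ)) : Rep K ↥(SSx K) :=
  GRep.sub (repCx K ψ) (SSx_invariant ψ hψlc)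

/-- The `TS`-module `𝔼[χ]`, i.e. `C_c^∞(k)` with the `χ`-twisted action. -/
def ERep (ψ : AddChar K ℂ) (hψlc : IsLocallyConstant (⇑ψ)) (χ : Kˣ →* ℂˣ) : Rep K ↥(CcK K) :=
  GRep.sub (repCc K ψ χ) (CcK_invariant ψ hψlc χ)

/-- The `TS`-module `𝕊^s`, a direct sum of `s` copies of `𝕊`. -/
def SRepPow (ψ : AddChar K ℂ) (hψlc : IsLocallyConstant (⇑ψ)) (s : ℕ) :
    Rep K (Fin s → ↥(SSx K)) where
  toFun g := LinearMap.pi fun i => (SRep ψ hψlc g).comp (LinearMap.proj i)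
  map_one' := by
    apply LinearMap.ext; intro v; funext i
    simp
  map_mul' g h := by
    apply LinearMap.ext; intro v; funext i
    simp [map_mul]

/-- The submodule `E` of `C_b^∞(k^×)` consisting of functions which are `χ`-eigenvectors
modulo `𝕊`; the quotient `E/𝕊` is the `χ`-eigenspace of `C_b^∞(k^×)/𝕊`. -/
def quotEigen (ψ : AddChar K ℂ) (χ : Kˣ →* ℂˣ) : Submodule ℂ (Kˣ → ℂ) where
  carrier := {f | f ∈ Cb K ∧ ∀ u : Kˣ, repCx K ψ (Aff.xT u) f - (χ u : ℂ) • f ∈ SSx K}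
  zero_mem' := ⟨(Cb K).zero_mem, fun u => by simpa using (SSx K).zero_mem⟩
  add_mem' {a b} ha hb := by
    refine ⟨(Cb K).add_mem ha.1 hb.1, fun u => ?_⟩
    rw [map_add, smul_add, add_sub_add_comm]
    exact (SSx K).add_mem (ha.2 u) (hb.2 u)
  smul_mem' c f hf := by
    refine ⟨(Cb K).smul_mem c hf.1, fun u => ?_⟩
    rw [map_smul, smul_comm, ← smul_sub]
    exact (SSx K).smul_mem c (hf.2 u)

/-- Evaluation at `0 ∈ k`, realizing the quotient map `𝔼[χ] → ℂ_χ` with kernel `𝕊`. -/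
def ev0 : ↥(CcK K) →ₗ[ℂ] ℂ where
  toFun f := (f : K → ℂ) 0
  map_add' f g := rfl
  map_smul' c f := rfl

end Concrete

/-! ### The diagonal torus in GL(2). -/

section GL2

variable {K : Type*} [Field K]

/-- The diagonal element `diag(a, b)` of `GL(2, K)`. -/
def diagGL (a b : Kˣ) : Matrix.GeneralLinearGroup (Fin 2) K where
  val := Matrix.diagonal ![(a : K), (b : K)]
  inv := Matrix.diagonal ![((a : K))⁻¹, ((b : K))⁻¹]
  val_inv := by
    ext i j
    fin_cases i <;> fin_cases j <;>
      simp [Matrix.mul_apply, Fin.sum_univ_two, Matrix.diagonal, Matrix.one_apply,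
        a.ne_zero, b.ne_zero]
  inv_val := by
    ext i j
    fin_cases i <;> fin_cases j <;>
      simp [Matrix.mul_apply, Fin.sum_univ_two, Matrix.diagonal, Matrix.one_apply,
        a.ne_zero, b.ne_zero]

end GL2

section Avg

variable {H : Type*} [CommGroup H] {V : Type*} [AddCommGroup V] [Module ℂ V]

/-- stabilizer -/
def stabSub (τ : Representation ℂ H V) (v : V) : Subgroup H where
  carrier := {h | τ h v = v}
  one_mem' := by simp
  mul_mem' {a b} ha hb := by
    simp only [Set.mem_setOf_eq] at *
    rw [map_mul, Module.End.mul_apply, hb, ha]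
  inv_mem' {a} ha := by
    simp only [Set.mem_setOf_eq] at *
    conv_lhs => rw [← ha]
    rw [← Module.End.mul_apply, ← map_mul]; simp

lemma mem_stabSub (τ : Representation ℂ H V) (v : V) (h : H) :
    h ∈ stabSub τ v ↔ τ h v = v := Iff.rfl

/-- average over `H/L` -/
def avgL (τ : Representation ℂ H V) (L : Subgroup H) (v : V) : V :=
  ((Nat.card (H ⧸ L) : ℂ))⁻¹ • ∑ᶠ q : H ⧸ L, τ q.out v

lemma apply_eq_of_mk_eq (τ : Representation ℂ H V) {L : Subgroup H} {v : V}
    (hL : L ≤ stabSub τ v) {a b : H} (h : (a : H ⧸ L) = b) : τ a v = τ b v := by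
  have h1 : a⁻¹ * b ∈ L := QuotientGroup.eq.1 h
  have h2 := hL h1
  rw [mem_stabSub] at h2
  conv_lhs => rw [← h2]
  rw [← Module.End.mul_apply, ← map_mul]; simp

lemma avgL_eq (τ : Representation ℂ H V) {L L' : Subgroup H} {v : V} (hLL : L ≤ L')
    (hL' : L' ≤ stabSub τ v) [Finite (H ⧸ L)] : avgL τ L v = avgL τ L' v := by
  have e := Subgroup.quotientEquivProdOfLE hLL
  have hfst : ∀ a : H, ((Subgroup.quotientEquivProdOfLE hLL) (a : H ⧸ L)).1 = (a : H ⧸ L') := by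
    intro a; rfl
  haveI : Finite ((H ⧸ L') × (L' ⧸ L.subgroupOf L')) := Finite.of_equiv _ e
  haveI : Finite (H ⧸ L') := Finite.of_surjective (fun p : (H ⧸ L') × (L' ⧸ L.subgroupOf L') => p.1)
    (fun a => ⟨(a, ((1 : L') : L' ⧸ L.subgroupOf L')), rfl⟩)
  haveI : Finite (L' ⧸ L.subgroupOf L') :=
    Finite.of_surjective (fun p : (H ⧸ L') × (L' ⧸ L.subgroupOf L') => p.2)
    (fun a => ⟨(((1 : H) : H ⧸ L'), a), rfl⟩)
  haveI := Fintype.ofFinite (H ⧸ L)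
  haveI := Fintype.ofFinite (H ⧸ L')
  haveI := Fintype.ofFinite (L' ⧸ L.subgroupOf L')
  have hc : Nat.card (H ⧸ L) = Nat.card (H ⧸ L') * Nat.card (L' ⧸ L.subgroupOf L') := by
    rw [Nat.card_congr e, Nat.card_prod]
  have hpos : (Nat.card (L' ⧸ L.subgroupOf L') : ℂ) ≠ 0 := by
    have : Nat.card (L' ⧸ L.subgroupOf L') ≠ 0 := Nat.card_pos.ne'
    exact_mod_cast this
  unfold avgL
  rw [hc, finsum_eq_sum_of_fintype, finsum_eq_sum_of_fintype]
  have : ∑ q : H ⧸ L, τ q.out v = (Nat.card (L' ⧸ L.subgroupOf L') : ℂ) • ∑ q : H ⧸ L', τ q.out v := by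
    rw [← Equiv.sum_comp (Subgroup.quotientEquivProdOfLE hLL).symm, Fintype.sum_prod_type,
      Finset.smul_sum]
    refine Finset.sum_congr rfl fun a _ => ?_
    rw [Finset.sum_congr rfl (g := fun _ => τ a.out v)]
    · simp [Nat.card_eq_fintype_card, ← Nat.cast_smul_eq_nsmul ℂ]
    · intro x _
      refine apply_eq_of_mk_eq τ hL' ?_
      rw [← hfst, QuotientGroup.out_eq', Equiv.apply_symm_apply, QuotientGroup.out_eq']
  rw [this, smul_smul]
  congr 1
  push_cast
  field_simp

theorem exists_avg (τ : Representation ℂ H V) (hfin : ∀ v, Finite (H ⧸ stabSub τ v)) :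
    ∃ e : V →ₗ[ℂ] V, (∀ h v, e (τ h v) = e v) ∧ (∀ h v, τ h (e v) = e v) ∧
      (∀ v, v - e v ∈ Submodule.span ℂ {w | ∃ (h : H) (x : V), w = τ h x - x}) ∧
      (∀ (v : V) (L : Subgroup H), L ≤ stabSub τ v → Finite (H ⧸ L) → e v = avgL τ L v) := by
  have key : ∀ (v : V) (L : Subgroup H), L ≤ stabSub τ v → Finite (H ⧸ L) →
      avgL τ (stabSub τ v) v = avgL τ L v := by
    intro v L hL hf
    exact (avgL_eq τ hL le_rfl).symm
  refine ⟨⟨⟨fun v => avgL τ (stabSub τ v) v, ?_⟩, ?_⟩, ?_, ?_, ?_, key⟩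
  · intro v w
    haveI : (stabSub τ v).FiniteIndex := by
      have := hfin v
      exact Subgroup.finiteIndex_of_finite_quotient
    haveI : (stabSub τ w).FiniteIndex := by
      have := hfin w
      exact Subgroup.finiteIndex_of_finite_quotient
    have hf : Finite (H ⧸ (stabSub τ v ⊓ stabSub τ w)) := inferInstance
    haveI := Fintype.ofFinite (H ⧸ (stabSub τ v ⊓ stabSub τ w))
    rw [key v _ inf_le_left hf, key w _ inf_le_right hf, key (v + w) (stabSub τ v ⊓ stabSub τ w) _ hf]
    · simp only [avgL, finsum_eq_sum_of_fintype, map_add, Finset.sum_add_distrib, smul_add]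
    · rintro h ⟨h1, h2⟩
      have h1' : τ h v = v := h1
      have h2' : τ h w = w := h2
      show τ h (v + w) = v + w
      rw [map_add, h1', h2']
  · intro c v
    haveI := hfin v
    haveI := Fintype.ofFinite (H ⧸ stabSub τ v)
    show avgL τ (stabSub τ (c • v)) (c • v) = c • avgL τ (stabSub τ v) v
    rw [key (c • v) (stabSub τ v) _ (hfin v)]
    · simp only [avgL, finsum_eq_sum_of_fintype, map_smul, ← Finset.smul_sum]
      rw [smul_comm]
    · intro h h1
      have h1' : τ h v = v := h1
      show τ h (c • v) = c • v
      rw [map_smul, h1']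
  · intro h v
    show avgL τ (stabSub τ (τ h v)) (τ h v) = avgL τ (stabSub τ v) v
    haveI := hfin v
    haveI := Fintype.ofFinite (H ⧸ stabSub τ v)
    rw [key (τ h v) (stabSub τ v) _ (hfin v)]
    · simp only [avgL, finsum_eq_sum_of_fintype]
      congr 1
      rw [← Equiv.sum_comp (Equiv.mulRight (h : H ⧸ stabSub τ v)) (fun q => τ q.out v)]
      refine Finset.sum_congr rfl fun q _ => ?_
      rw [← Module.End.mul_apply, ← map_mul]
      refine apply_eq_of_mk_eq τ le_rfl ?_
      simp
    · intro x hx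
      have hx' : τ x v = v := hx
      show τ x (τ h v) = τ h v
      rw [← Module.End.mul_apply, ← map_mul, mul_comm, map_mul, Module.End.mul_apply, hx']
  · intro h v
    show τ h (avgL τ (stabSub τ v) v) = avgL τ (stabSub τ v) v
    haveI := hfin v
    haveI := Fintype.ofFinite (H ⧸ stabSub τ v)
    simp only [avgL, finsum_eq_sum_of_fintype, map_smul, map_sum]
    congr 1
    rw [← Equiv.sum_comp (Equiv.mulLeft (h : H ⧸ stabSub τ v)) (fun q => τ q.out v)]
    refine Finset.sum_congr rfl fun q _ => ?_
    rw [← Module.End.mul_apply, ← map_mul]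
    refine apply_eq_of_mk_eq τ le_rfl ?_
    simp
  · intro v
    show v - avgL τ (stabSub τ v) v ∈ _
    haveI := hfin v
    haveI := Fintype.ofFinite (H ⧸ stabSub τ v)
    have hne : (Nat.card (H ⧸ stabSub τ v) : ℂ) ≠ 0 := by
      have : Nat.card (H ⧸ stabSub τ v) ≠ 0 := Nat.card_pos.ne'
      exact_mod_cast this
    have : v - avgL τ (stabSub τ v) v =
        -((Nat.card (H ⧸ stabSub τ v) : ℂ)⁻¹ • ∑ q : H ⧸ stabSub τ v, (τ q.out v - v)) := by
      rw [Finset.sum_sub_distrib, smul_sub, avgL, finsum_eq_sum_of_fintype]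
      simp only [Finset.sum_const, Finset.card_univ, ← Nat.cast_smul_eq_nsmul ℂ,
        ← Nat.card_eq_fintype_card]
      rw [smul_smul, inv_mul_cancel₀ hne, one_smul, neg_sub]
    rw [this]
    refine Submodule.neg_mem _ (Submodule.smul_mem _ _ (Submodule.sum_mem _ fun q _ => ?_))
    exact Submodule.subset_span ⟨q.out, v, rfl⟩

lemma finite_stab [TopologicalSpace H] [IsTopologicalGroup H] [CompactSpace H]
    (τ : Representation ℂ H V) (v : V) (hs : ∀ᶠ h in nhds (1 : H), τ h v = v) :
    Finite (H ⧸ stabSub τ v) := by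
  apply Subgroup.quotient_finite_of_isOpen
  exact Subgroup.isOpen_of_mem_nhds _ (g := 1) hs

end Avg

section EndIdx

/-- index of an endomorphism -/
def EndIdx {M : Type*} [AddCommGroup M] [Module ℂ M] (f : M →ₗ[ℂ] M) (d : ℕ) : Prop :=
  Module.Finite ℂ (M ⧸ LinearMap.range f) ∧ Module.Finite ℂ (LinearMap.ker f) ∧
    Module.finrank ℂ (M ⧸ LinearMap.range f) = Module.finrank ℂ (LinearMap.ker f) + d

lemma finite_of_exact {A B C : Type*} [AddCommGroup A] [Module ℂ A] [AddCommGroup B] [Module ℂ B]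
    [AddCommGroup C] [Module ℂ C] (f : A →ₗ[ℂ] B) (g : B →ₗ[ℂ] C) (h : Function.Exact f g)
    [Module.Finite ℂ A] [Module.Finite ℂ C] : Module.Finite ℂ B ∧
    Module.finrank ℂ B = Module.finrank ℂ (LinearMap.range f) + Module.finrank ℂ (LinearMap.range g) := by
  have hk : LinearMap.ker g = LinearMap.range f := LinearMap.exact_iff.1 h
  have h1 : Module.Finite ℂ (LinearMap.ker g) := by rw [hk]; infer_instance
  have h2 : Module.Finite ℂ (LinearMap.range g) := inferInstance
  have : Module.Finite ℂ B := by
    have : Module.Finite ℂ (B ⧸ LinearMap.ker g) :=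
      Module.Finite.equiv g.quotKerEquivRange.symm
    exact Module.Finite.of_submodule_quotient (LinearMap.ker g)
  refine ⟨this, ?_⟩
  rw [← LinearMap.finrank_range_add_finrank_ker g, hk, add_comm]

lemma EndIdx.add {A B C : Type*} [AddCommGroup A] [Module ℂ A] [AddCommGroup B] [Module ℂ B]
    [AddCommGroup C] [Module ℂ C] {a : A →ₗ[ℂ] A} {b : B →ₗ[ℂ] B} {c : C →ₗ[ℂ] C}
    (f : A →ₗ[ℂ] B) (g : B →ₗ[ℂ] C) (hf : Function.Injective f) (hg : Function.Surjective g)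
    (hfg : Function.Exact f g) (hab : f.comp a = b.comp f) (hbc : g.comp b = c.comp g)
    {d d' : ℕ} (ha : EndIdx a d) (hc : EndIdx c d') : EndIdx b (d + d') := by
  obtain ⟨ha1, ha2, ha3⟩ := ha
  obtain ⟨hc1, hc2, hc3⟩ := hc
  have hab' : ∀ x, f (a x) = b (f x) := fun x => LinearMap.congr_fun hab x
  have hbc' : ∀ x, g (b x) = c (g x) := fun x => LinearMap.congr_fun hbc x
  let k1 : LinearMap.ker a →ₗ[ℂ] LinearMap.ker b := f.restrict (by
    intro x hx; rw [LinearMap.mem_ker] at *; rw [← hab', hx, map_zero])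
  let k2 : LinearMap.ker b →ₗ[ℂ] LinearMap.ker c := g.restrict (by
    intro x hx; rw [LinearMap.mem_ker] at *; rw [← hbc', hx, map_zero])
  let c1 : (A ⧸ LinearMap.range a) →ₗ[ℂ] (B ⧸ LinearMap.range b) :=
    Submodule.mapQ _ _ f (by rintro _ ⟨x, rfl⟩; exact ⟨f x, (hab' x).symm⟩)
  let c2 : (B ⧸ LinearMap.range b) →ₗ[ℂ] (C ⧸ LinearMap.range c) :=
    Submodule.mapQ _ _ g (by rintro _ ⟨x, rfl⟩; exact ⟨g x, (hbc' x).symm⟩)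
  have ek : Function.Exact k1 k2 := by
    rintro ⟨x, hx⟩
    constructor
    · intro h
      have h' : g x = 0 := congrArg Subtype.val h
      obtain ⟨y, rfl⟩ := (hfg x).1 h'
      refine ⟨⟨y, ?_⟩, rfl⟩
      rw [LinearMap.mem_ker] at *
      apply hf
      rw [hab', hx, map_zero]
    · rintro ⟨y, hy⟩
      rw [← hy]
      apply Subtype.ext
      exact (hfg _).2 ⟨y.1, rfl⟩
  have ec : Function.Exact c1 c2 := by
    intro x
    obtain ⟨x, rfl⟩ := Submodule.Quotient.mk_surjective _ x
    constructor
    · intro h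
      have h' : (Submodule.Quotient.mk (g x) : C ⧸ LinearMap.range c) = 0 := h
      rw [Submodule.Quotient.mk_eq_zero] at h'
      obtain ⟨z, hz⟩ := h'
      obtain ⟨y, rfl⟩ := hg z
      have : g (x - b y) = 0 := by rw [map_sub, hbc', hz, sub_self]
      obtain ⟨w, hw⟩ := (hfg _).1 this
      refine ⟨Submodule.Quotient.mk w, ?_⟩
      show (Submodule.Quotient.mk (f w) : B ⧸ LinearMap.range b) = _
      rw [hw, Submodule.Quotient.eq]
      exact ⟨-y, by simp⟩
    · rintro ⟨y, hy⟩
      obtain ⟨y, rfl⟩ := Submodule.Quotient.mk_surjective _ y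
      rw [← hy]
      show (Submodule.Quotient.mk (g (f y)) : C ⧸ LinearMap.range c) = 0
      rw [(hfg _).2 ⟨y, rfl⟩]; rfl
  have ea : Function.Exact (LinearMap.ker a).subtype a := LinearMap.exact_subtype_ker_map a
  let δ := SnakeLemma.δ' a b c f g hfg f g hfg hab hbc (LinearMap.ker c).subtype
    (LinearMap.exact_subtype_ker_map c) (LinearMap.range a).mkQ (LinearMap.exact_map_mkQ_range a) hg hf
  have e1 : Function.Exact k2 δ :=
    SnakeLemma.exact_δ'_right a b c f g hfg f g hfg hab hbc (LinearMap.ker b).subtype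
    (LinearMap.exact_subtype_ker_map b) (LinearMap.ker c).subtype
    (LinearMap.exact_subtype_ker_map c) (LinearMap.range a).mkQ (LinearMap.exact_map_mkQ_range a) hg hf
      k2 rfl Subtype.val_injective
  have e2 : Function.Exact δ c1 :=
    SnakeLemma.exact_δ'_left a b c f g hfg f g hfg hab hbc
     (LinearMap.ker c).subtype
    (LinearMap.exact_subtype_ker_map c) (LinearMap.range a).mkQ (LinearMap.exact_map_mkQ_range a)
    (LinearMap.range b).mkQ (LinearMap.exact_map_mkQ_range b) hg hf
      c1 rfl (Submodule.mkQ_surjective _)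
  have k1i : Function.Injective k1 := fun x y h => Subtype.ext (hf (congrArg Subtype.val h))
  have c2s : Function.Surjective c2 := by
    intro x
    obtain ⟨x, rfl⟩ := Submodule.Quotient.mk_surjective _ x
    obtain ⟨y, rfl⟩ := hg x
    exact ⟨Submodule.Quotient.mk y, rfl⟩
  obtain ⟨f1, r1⟩ := finite_of_exact k1 k2 ek
  obtain ⟨f2, r2⟩ := finite_of_exact c1 c2 ec
  obtain ⟨_, r3⟩ := finite_of_exact k2 δ e1
  obtain ⟨_, r4⟩ := finite_of_exact δ c1 e2
  rw [LinearMap.finrank_range_of_inj k1i] at r1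
  rw [LinearMap.range_eq_top.2 c2s, finrank_top] at r2
  refine ⟨f2, f1, ?_⟩
  omega

end EndIdx

section FieldFacts

variable {K : Type*} [NontriviallyNormedField K] [IsUltrametricDist K] [ProperSpace K]

variable (K) in
lemma exists_unif : ∃ ϖ : Kˣ, ‖(ϖ : K)‖ < 1 ∧
    ∀ x : Kˣ, ∃ n : ℤ, ‖(x : K)‖ = ‖(ϖ : K)‖ ^ n := by
  have hc : IsCompact (Metric.ball (0 : K) 1) :=
    (isCompact_closedBall (0 : K) 1).of_isClosed_subset (IsUltrametricDist.isClosed_ball 0 1)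
      Metric.ball_subset_closedBall
  obtain ⟨p, hp, hmax⟩ := hc.exists_isMaxOn ⟨0, by simp⟩ (continuous_norm.continuousOn)
  have hp1 : ‖p‖ < 1 := by simpa using hp
  obtain ⟨y, hy0, hy1⟩ := NormedField.exists_norm_lt K one_pos
  have hmax' : ∀ z : K, ‖z‖ < 1 → ‖z‖ ≤ ‖p‖ := fun z hz => hmax (by simpa using hz)
  have hp0 : 0 < ‖p‖ := lt_of_lt_of_le (hy0) (hmax' y hy1)
  have hpne : p ≠ 0 := norm_pos_iff.1 hp0
  refine ⟨Units.mk0 p hpne, hp1, fun x => ?_⟩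
  have hx : 0 < ‖(x : K)‖ := norm_pos_iff.2 x.ne_zero
  obtain ⟨n, hn1, hn2⟩ := exists_mem_Ioc_zpow hx (one_lt_inv₀ hp0 |>.2 hp1)
  refine ⟨-(n + 1), ?_⟩
  simp only [Units.val_mk0]
  have h3 : ‖(x : K) * p ^ (n + 1)‖ = ‖(x : K)‖ * ‖p‖ ^ (n + 1) := by simp
  have hpn : 0 < ‖p‖ ^ (n + 1) := zpow_pos hp0 _
  have hle : ‖(x : K) * p ^ (n + 1)‖ ≤ 1 := by
    rw [h3]
    rw [inv_zpow] at hn2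
    calc _ ≤ (‖p‖ ^ (n + 1))⁻¹ * ‖p‖ ^ (n + 1) := by gcongr
      _ = 1 := inv_mul_cancel₀ hpn.ne'
  have hgt : ‖p‖ < ‖(x : K) * p ^ (n + 1)‖ := by
    rw [h3]
    rw [inv_zpow] at hn1
    calc ‖p‖ = (‖p‖ ^ n)⁻¹ * ‖p‖ ^ (n + 1) := by
          rw [zpow_add_one₀ hp0.ne', inv_mul_cancel_left₀ (zpow_pos hp0 _).ne']
      _ < _ := by gcongr
  have heq : ‖(x : K) * p ^ (n + 1)‖ = 1 := by
    by_contra hne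
    exact absurd (hmax' _ (lt_of_le_of_ne hle hne)) (not_le.2 hgt)
  rw [h3] at heq
  rw [zpow_neg]
  exact eq_inv_of_mul_eq_one_left heq

variable (K) in
/-- units of norm one -/
def normOne : Subgroup Kˣ where
  carrier := {u | ‖(u : K)‖ = 1}
  one_mem' := by simp
  mul_mem' {a b} ha hb := by
    show ‖((a * b : Kˣ) : K)‖ = 1
    have ha' : ‖(a : K)‖ = 1 := ha
    have hb' : ‖(b : K)‖ = 1 := hb
    simp [ha', hb']
  inv_mem' {a} ha := by
    show ‖((a⁻¹ : Kˣ) : K)‖ = 1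
    have ha' : ‖(a : K)‖ = 1 := ha
    simp [ha']

lemma mem_normOne (u : Kˣ) : u ∈ normOne K ↔ ‖(u : K)‖ = 1 := Iff.rfl

lemma isCompact_annulus (r R : ℝ) (hr : 0 < r) :
    IsCompact {u : Kˣ | r ≤ ‖(u : K)‖ ∧ ‖(u : K)‖ ≤ R} := by
  rw [Units.isEmbedding_val₀.isCompact_iff]
  have : ((↑) : Kˣ → K) '' {u : Kˣ | r ≤ ‖(u : K)‖ ∧ ‖(u : K)‖ ≤ R} =
      {x : K | r ≤ ‖x‖} ∩ Metric.closedBall 0 R := by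
    ext x
    constructor
    · rintro ⟨u, ⟨h1, h2⟩, rfl⟩
      exact ⟨h1, by simpa using h2⟩
    · rintro ⟨h1, h2⟩
      have h1' : r ≤ ‖x‖ := h1
      have hx : x ≠ 0 := norm_pos_iff.1 (lt_of_lt_of_le hr h1')
      exact ⟨Units.mk0 x hx, ⟨h1', by simpa using h2⟩, rfl⟩
  rw [this]
  exact (isCompact_closedBall _ _).inter_left (isClosed_le continuous_const continuous_norm)

instance : CompactSpace (normOne K) := by
  refine (isCompact_iff_compactSpace (s := (normOne K : Set Kˣ))).1 ?_
  have := isCompact_annulus (K := K) 1 1 one_pos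
  convert this using 1
  ext u
  show ‖(u : K)‖ = 1 ↔ _
  constructor
  · intro h; exact ⟨h.ge, h.le⟩
  · rintro ⟨h1, h2⟩; exact le_antisymm h2 h1

lemma unif_top {ϖ : Kˣ} (hϖ : ∀ x : Kˣ, ∃ n : ℤ, ‖(x : K)‖ = ‖(ϖ : K)‖ ^ n)
    (S : Subgroup Kˣ) (h1 : normOne K ≤ S) (h2 : ϖ ∈ S) (u : Kˣ) : u ∈ S := by
  obtain ⟨n, hn⟩ := hϖ u
  have : u * (ϖ ^ n)⁻¹ ∈ normOne K := by
    rw [mem_normOne]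
    have : ‖(ϖ : K)‖ ≠ 0 := norm_ne_zero_iff.2 ϖ.ne_zero
    simp [hn, mul_inv_cancel₀ (zpow_ne_zero n this)]
  have h3 := S.mul_mem (h1 this) (S.zpow_mem h2 n)
  simpa using h3

end FieldFacts

/-- twist of a representation by a character -/
def twistRep {H : Type*} [CommGroup H] {V : Type*} [AddCommGroup V] [Module ℂ V]
    (τ : Representation ℂ H V) (θ : H →* ℂ) : Representation ℂ H V where
  toFun h := θ h • τ h
  map_one' := by simp
  map_mul' a b := by
    ext v
    simp [smul_smul, mul_comm]

section TMod

variable {K : Type*} [NontriviallyNormedField K]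
variable {X : Type*} [AddCommGroup X] [Module ℂ X]

/-- smooth -/
def TSm (τ : Representation ℂ Kˣ X) : Prop := ∀ x, ∀ᶠ u in nhds (1 : Kˣ), τ u x = x

/-- isotypic part -/
def PP (τ : Representation ℂ Kˣ X) (χ : Kˣ →* ℂˣ) : Submodule ℂ X where
  carrier := {x | ∀ u : Kˣ, ‖(u : K)‖ = 1 → τ u x = (χ u : ℂ) • x}
  zero_mem' := fun u _ => by simp
  add_mem' {a b} ha hb := fun u hu => by rw [map_add, ha u hu, hb u hu, smul_add]
  smul_mem' c x hx := fun u hu => by rw [map_smul, hx u hu]; exact smul_comm c ((χ u : ℂ)) x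

lemma mem_PP (τ : Representation ℂ Kˣ X) (χ : Kˣ →* ℂˣ) (x : X) :
    x ∈ PP τ χ ↔ ∀ u : Kˣ, ‖(u : K)‖ = 1 → τ u x = (χ u : ℂ) • x := Iff.rfl

/-- complement -/
def VU (τ : Representation ℂ Kˣ X) (χ : Kˣ →* ℂˣ) : Submodule ℂ X :=
  Submodule.span ℂ {w | ∃ (u : Kˣ) (x : X), ‖(u : K)‖ = 1 ∧ w = τ u x - (χ u : ℂ) • x}

lemma VU_le (τ : Representation ℂ Kˣ X) (χ : Kˣ →* ℂˣ) : VU τ χ ≤ tTwistKerT τ χ := by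
  refine Submodule.span_mono ?_
  rintro w ⟨u, x, _, rfl⟩
  exact ⟨u, x, rfl⟩

lemma exists_proj [IsUltrametricDist K] [ProperSpace K]
    (τ : Representation ℂ Kˣ X) (χ : Kˣ →* ℂˣ) (hτ : TSm τ) (hχ : SmoothMulChar χ) :
    ∃ e : X →ₗ[ℂ] X, (∀ x, e x ∈ PP τ χ) ∧ (∀ x ∈ PP τ χ, e x = x) ∧ (∀ x ∈ VU τ χ, e x = 0) ∧
      ∀ x, x - e x ∈ VU τ χ := by
  let σ : Representation ℂ (normOne K) X :=
    twistRep (τ.comp (normOne K).subtype) ((Units.coeHom ℂ).comp (χ⁻¹.comp (normOne K).subtype))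
  have hσ : ∀ (u : normOne K) x, σ u x = ((χ u)⁻¹ : ℂˣ).1 • τ u x := fun u x => rfl
  have hχ1 : ∀ᶠ u in nhds (1 : Kˣ), χ u = 1 := hχ.mem_nhds (by simp)
  have hfin : ∀ x, Finite (normOne K ⧸ stabSub σ x) := by
    intro x
    refine finite_stab σ x ?_
    have h1 := (hτ x).and hχ1
    have hc : Filter.Tendsto ((↑) : normOne K → Kˣ) (nhds 1) (nhds 1) :=
      (continuous_subtype_val (p := fun u => u ∈ normOne K)).tendsto (1 : normOne K)
    filter_upwards [hc.eventually h1] with u hu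
    rw [hσ, hu.1, hu.2]; simp
  obtain ⟨e, he1, he2, he3, he4⟩ := exists_avg σ hfin
  have hfix : ∀ (u : Kˣ) (x y : X), ((χ u)⁻¹ : ℂˣ).1 • τ u x = y ↔ τ u x = (χ u : ℂ) • y := by
    intro u x y
    constructor
    · rintro rfl; simp [smul_smul]
    · intro h; rw [h]; simp [smul_smul]
  have hVU : ∀ x ∈ VU τ χ, e x = 0 := by
    intro x hx
    have : VU τ χ ≤ LinearMap.ker e := by
      refine Submodule.span_le.2 ?_
      rintro w ⟨u, x, hu, rfl⟩
      have := he1 ⟨u, hu⟩ x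
      rw [hσ, map_smul] at this
      simp only [SetLike.mem_coe, LinearMap.mem_ker, map_sub, map_smul]
      have h2 := congrArg (fun z => (χ u : ℂ) • z) this
      simp only [smul_smul] at h2
      simp at h2
      rw [h2, sub_self]
    exact this hx
  have hd : ∀ x, x - e x ∈ VU τ χ := by
    intro x
    have : Submodule.span ℂ {w | ∃ (h : normOne K) (x : X), w = σ h x - x} ≤ VU τ χ := by
      refine Submodule.span_le.2 ?_
      rintro w ⟨u, y, rfl⟩
      have : σ u y - y = ((χ u)⁻¹ : ℂˣ).1 • (τ u y - (χ u : ℂ) • y) := by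
        rw [hσ, smul_sub, smul_smul]; simp
      rw [this]
      exact Submodule.smul_mem _ _ (Submodule.subset_span ⟨u, y, u.2, rfl⟩)
    exact this (he3 x)
  refine ⟨e, ?_, ?_, hVU, hd⟩
  · intro x u hu
    have := he2 ⟨u, hu⟩ x
    rw [hσ, hfix] at this
    exact this
  · intro x hx
    have hall : ∀ u : normOne K, σ u x = x := by
      intro u
      rw [hσ, hfix]
      exact hx u u.2
    have hfin := hfin x
    have h1 := he4 x (stabSub σ x) le_rfl hfin
    have := Fintype.ofFinite (normOne K ⧸ stabSub σ x)
    have hne : (Nat.card (normOne K ⧸ stabSub σ x) : ℂ) ≠ 0 := by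
      have : Nat.card (normOne K ⧸ stabSub σ x) ≠ 0 := Nat.card_pos.ne'
      exact_mod_cast this
    rw [h1, avgL, finsum_eq_sum_of_fintype]
    simp only [hall, Finset.sum_const, Finset.card_univ, ← Nat.cast_smul_eq_nsmul ℂ,
        ← Nat.card_eq_fintype_card]
    rw [smul_smul, inv_mul_cancel₀ hne, one_smul]

lemma comm_apply (τ : Representation ℂ Kˣ X) (a b : Kˣ) (x : X) :
    τ a (τ b x) = τ b (τ a x) := by
  rw [← Module.End.mul_apply, ← map_mul, mul_comm, map_mul, Module.End.mul_apply]

lemma PP_stable (τ : Representation ℂ Kˣ X) (χ : Kˣ →* ℂˣ) (ϖ : Kˣ) (x : X) (hx : x ∈ PP τ χ) :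
    τ ϖ x ∈ PP τ χ := by
  intro u hu
  rw [comm_apply, hx u hu, map_smul]

lemma VU_stable (τ : Representation ℂ Kˣ X) (χ : Kˣ →* ℂˣ) (ϖ : Kˣ) (x : X) (hx : x ∈ VU τ χ) :
    τ ϖ x ∈ VU τ χ := by
  have : VU τ χ ≤ (VU τ χ).comap (τ ϖ) := by
    refine Submodule.span_le.2 ?_
    rintro w ⟨u, x, hu, rfl⟩
    refine Submodule.subset_span ⟨u, τ ϖ x, hu, ?_⟩
    rw [map_sub, map_smul, comm_apply]
  exact this hx

/-- `τ ϖ - χ ϖ` on the isotypic part -/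
def phi (τ : Representation ℂ Kˣ X) (χ : Kˣ →* ℂˣ) (ϖ : Kˣ) : PP τ χ →ₗ[ℂ] PP τ χ :=
  (τ ϖ - (χ ϖ : ℂ) • LinearMap.id).restrict (fun x hx => by
    show τ ϖ x - (χ ϖ : ℂ) • x ∈ _
    exact Submodule.sub_mem _ (PP_stable τ χ ϖ x hx) (Submodule.smul_mem _ _ hx))

lemma phi_val (τ : Representation ℂ Kˣ X) (χ : Kˣ →* ℂˣ) (ϖ : Kˣ) (x : PP τ χ) :
    (phi τ χ ϖ x : X) = τ ϖ x - (χ ϖ : ℂ) • (x : X) := rfl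

/-- index of a `T`-module -/
def HasIdx (τ : Representation ℂ Kˣ X) (χ : Kˣ →* ℂˣ) (d : ℕ) : Prop :=
  Module.Finite ℂ (X ⧸ tTwistKerT τ χ) ∧ Module.Finite ℂ (tEigenT τ χ) ∧
    Module.finrank ℂ (X ⧸ tTwistKerT τ χ) = Module.finrank ℂ (tEigenT τ χ) + d

/-- the eigenvalue subgroup -/
def eigSub (τ : Representation ℂ Kˣ X) (χ : Kˣ →* ℂˣ) (U : Submodule ℂ X)
    (hU : ∀ u, ∀ x ∈ U, τ u x ∈ U) (M : Submodule ℂ X) : Subgroup Kˣ where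
  carrier := {u | (∀ x ∈ M, τ u x ∈ M) ∧ (∀ x ∈ M, τ u⁻¹ x ∈ M) ∧
    ∀ x ∈ M, τ u x - (χ u : ℂ) • x ∈ U}
  one_mem' := by simp
  mul_mem' {a b} ha hb := by
    refine ⟨fun x hx => ?_, fun x hx => ?_, fun x hx => ?_⟩
    · rw [map_mul, Module.End.mul_apply]; exact ha.1 _ (hb.1 _ hx)
    · rw [mul_inv, map_mul, Module.End.mul_apply]; exact ha.2.1 _ (hb.2.1 _ hx)
    · have : τ (a * b) x - (χ (a * b) : ℂ) • x =
        τ a (τ b x - (χ b : ℂ) • x) + (χ b : ℂ) • (τ a x - (χ a : ℂ) • x) := by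
        rw [map_mul, map_mul, Module.End.mul_apply, map_sub, map_smul, smul_sub, smul_smul]
        simp [mul_comm]
      rw [this]
      exact U.add_mem (hU _ _ (hb.2.2 x hx)) (U.smul_mem _ (ha.2.2 x hx))
  inv_mem' {a} ha := by
    refine ⟨ha.2.1, fun x hx => ?_, fun x hx => ?_⟩
    · rw [inv_inv]; exact ha.1 x hx
    · have : τ a⁻¹ x - (χ a⁻¹ : ℂ) • x =
        (-(χ a⁻¹ : ℂ)) • τ a⁻¹ (τ a x - (χ a : ℂ) • x) := by
        have h : τ a⁻¹ (τ a x) = x := by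
          rw [← Module.End.mul_apply, ← map_mul]; simp
        rw [map_sub, map_smul, h, smul_sub, smul_smul]
        simp [sub_eq_add_neg, add_comm]
      rw [this]
      exact U.smul_mem _ (hU _ _ (ha.2.2 x hx))

lemma hasIdx_iff [IsUltrametricDist K] [ProperSpace K]
    (τ : Representation ℂ Kˣ X) (χ : Kˣ →* ℂˣ) (hτ : TSm τ) (hχ : SmoothMulChar χ)
    {ϖ : Kˣ} (hϖ : ∀ x : Kˣ, ∃ n : ℤ, ‖(x : K)‖ = ‖(ϖ : K)‖ ^ n) (d : ℕ) :
    HasIdx τ χ d ↔ EndIdx (phi τ χ ϖ) d := by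
  obtain ⟨e, he1, he2, he3, he4⟩ := exists_proj τ χ hτ hχ
  have hcomm : ∀ u x, e (τ u x) = τ u (e x) := by
    intro u x
    have h1 : τ u x = τ u (e x) + τ u (x - e x) := by rw [map_sub]; abel
    rw [h1, map_add, he2 _ (PP_stable τ χ u _ (he1 x)), he3 _ (VU_stable τ χ u _ (he4 x)), add_zero]
  -- eigenspaces
  have hk : tEigenT τ χ = (LinearMap.ker (phi τ χ ϖ)).map (PP τ χ).subtype := by
    ext x
    constructor
    · intro hx
      refine ⟨⟨x, fun u _ => hx u⟩, ?_, rfl⟩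
      show phi τ χ ϖ _ = 0
      apply Subtype.ext
      rw [phi_val]
      simp [hx ϖ]
    · rintro ⟨y, hy, rfl⟩
      have hy' : τ ϖ y - (χ ϖ : ℂ) • (y : X) = 0 := by
        rw [← phi_val, LinearMap.mem_ker.1 hy]; rfl
      rw [sub_eq_zero] at hy'
      intro u
      let S := stabSub (twistRep τ ((Units.coeHom ℂ).comp χ⁻¹)) (y : X)
      have hS : ∀ u, u ∈ S ↔ τ u y = (χ u : ℂ) • (y : X) := by
        intro u
        show ((χ u)⁻¹ : ℂˣ).1 • τ u y = y ↔ _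
        constructor
        · intro h; conv_rhs => rw [← h]
          simp [smul_smul]
        · intro h; rw [h]; simp [smul_smul]
      refine (hS u).1 (unif_top hϖ S ?_ ?_ u)
      · intro v hv
        exact (hS v).2 (y.2 v hv)
      · exact (hS ϖ).2 hy'
  let ek : tEigenT τ χ ≃ₗ[ℂ] LinearMap.ker (phi τ χ ϖ) :=
    (LinearEquiv.ofEq _ _ hk).trans
      (Submodule.equivMapOfInjective _ (Submodule.subtype_injective _) _).symm
  -- coinvariants
  let p : X →ₗ[ℂ] PP τ χ := e.codRestrict _ he1
  let π : X →ₗ[ℂ] (PP τ χ ⧸ LinearMap.range (phi τ χ ϖ)) := (LinearMap.range (phi τ χ ϖ)).mkQ.comp p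
  have hπs : Function.Surjective π := by
    intro y
    obtain ⟨y, rfl⟩ := Submodule.Quotient.mk_surjective _ y
    refine ⟨y, ?_⟩
    show Submodule.Quotient.mk (p y) = _
    congr 1
    exact Subtype.ext (he2 _ y.2)
  have hπ0 : ∀ x, π x = 0 ↔ p x ∈ LinearMap.range (phi τ χ ϖ) := by
    intro x
    show (Submodule.Quotient.mk (p x) : PP τ χ ⧸ LinearMap.range (phi τ χ ϖ)) = 0 ↔ _
    rw [Submodule.Quotient.mk_eq_zero]
  have hU : ∀ (u : Kˣ), ∀ x ∈ LinearMap.ker π, τ u x ∈ LinearMap.ker π := by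
    intro u x hx
    rw [LinearMap.mem_ker, hπ0] at *
    obtain ⟨y, hy⟩ := hx
    refine ⟨⟨τ u y, PP_stable τ χ u _ y.2⟩, ?_⟩
    apply Subtype.ext
    rw [phi_val]
    show τ ϖ (τ u y) - (χ ϖ : ℂ) • τ u y = e (τ u x)
    rw [hcomm, comm_apply, ← map_smul, ← map_sub]
    congr 1
    exact congrArg Subtype.val hy
  have hkπ : LinearMap.ker π = tTwistKerT τ χ := by
    apply le_antisymm
    · intro x hx
      rw [LinearMap.mem_ker, hπ0] at hx
      obtain ⟨y, hy⟩ := hx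
      have hx2 : x = (x - e x) + (τ ϖ y - (χ ϖ : ℂ) • (y : X)) := by
        have := congrArg Subtype.val hy
        rw [phi_val] at this
        rw [this]
        show x = x - e x + e x
        abel
      rw [hx2]
      exact Submodule.add_mem _ (VU_le τ χ (he4 x)) (Submodule.subset_span ⟨ϖ, y, rfl⟩)
    · refine Submodule.span_le.2 ?_
      rintro w ⟨u, x, rfl⟩
      have := unif_top hϖ (eigSub τ χ (LinearMap.ker π) hU ⊤) ?_ ?_ u
      · exact this.2.2 x trivial
      · intro v hv
        refine ⟨fun _ _ => trivial, fun _ _ => trivial, fun y _ => ?_⟩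
        rw [LinearMap.mem_ker, hπ0]
        have : p (τ v y - (χ v : ℂ) • y) = 0 :=
          Subtype.ext (he3 _ (Submodule.subset_span ⟨v, y, hv, rfl⟩))
        rw [this]
        exact Submodule.zero_mem _
      · refine ⟨fun _ _ => trivial, fun _ _ => trivial, fun y _ => ?_⟩
        rw [LinearMap.mem_ker, hπ0]
        refine ⟨p y, ?_⟩
        apply Subtype.ext
        rw [phi_val]
        show τ ϖ (e y) - _ • e y = e _
        rw [map_sub, hcomm, map_smul]
  let ec : (X ⧸ tTwistKerT τ χ) ≃ₗ[ℂ] (PP τ χ ⧸ LinearMap.range (phi τ χ ϖ)) :=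
    (Submodule.quotEquivOfEq _ _ hkπ.symm).trans (π.quotKerEquivOfSurjective hπs)
  unfold HasIdx EndIdx
  rw [LinearEquiv.finrank_eq ek, LinearEquiv.finrank_eq ec, Module.Finite.equiv_iff ek,
    Module.Finite.equiv_iff ec]

lemma hasIdx_add [IsUltrametricDist K] [ProperSpace K]
    {Y Z : Type*} [AddCommGroup Y] [Module ℂ Y] [AddCommGroup Z] [Module ℂ Z]
    {τ : Representation ℂ Kˣ X} {σ : Representation ℂ Kˣ Y} {ω : Representation ℂ Kˣ Z}
    {χ : Kˣ →* ℂˣ} (hτ : TSm τ) (hσ : TSm σ) (hω : TSm ω) (hχ : SmoothMulChar χ)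
    (f : X →ₗ[ℂ] Y) (g : Y →ₗ[ℂ] Z) (hf : Function.Injective f) (hg : Function.Surjective g)
    (hfg : Function.Exact f g) (hfe : ∀ u x, f (τ u x) = σ u (f x))
    (hge : ∀ u x, g (σ u x) = ω u (g x)) {d d' : ℕ}
    (h1 : HasIdx τ χ d) (h2 : HasIdx ω χ d') : HasIdx σ χ (d + d') := by
  obtain ⟨ϖ, -, hϖ⟩ := exists_unif K
  rw [hasIdx_iff _ _ hτ hχ hϖ] at h1
  rw [hasIdx_iff _ _ hω hχ hϖ] at h2
  rw [hasIdx_iff _ _ hσ hχ hϖ]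
  have hfP : ∀ x ∈ PP τ χ, f x ∈ PP σ χ := by
    intro x hx u hu
    rw [← hfe, hx u hu, map_smul]
  have hgP : ∀ x ∈ PP σ χ, g x ∈ PP ω χ := by
    intro x hx u hu
    rw [← hge, hx u hu, map_smul]
  refine EndIdx.add (f.restrict hfP) (g.restrict hgP) ?_ ?_ ?_ ?_ ?_ h1 h2
  · intro x y h
    exact Subtype.ext (hf (congrArg Subtype.val h))
  · rintro ⟨z, hz⟩
    obtain ⟨y, rfl⟩ := hg z
    obtain ⟨e, he1, he2, he3, he4⟩ := exists_proj σ χ hσ hχ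
    obtain ⟨e', he1', he2', he3', he4'⟩ := exists_proj ω χ hω hχ
    refine ⟨⟨e y, he1 y⟩, Subtype.ext ?_⟩
    show g (e y) = g y
    have hgV : VU σ χ ≤ (VU ω χ).comap g := by
      refine Submodule.span_le.2 ?_
      rintro w ⟨u, x, hu, rfl⟩
      refine Submodule.subset_span ⟨u, g x, hu, ?_⟩
      rw [map_sub, map_smul, hge]
    have ha : g (y - e y) ∈ VU ω χ := hgV (he4 y)
    have hb : g (y - e y) ∈ PP ω χ := by
      rw [map_sub]
      exact Submodule.sub_mem _ hz (hgP _ (he1 y))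
    have hc := he2' _ hb
    rw [he3' _ ha, map_sub] at hc
    exact (sub_eq_zero.1 hc.symm).symm
  · rintro ⟨y, hy⟩
    constructor
    · intro h
      have h' : g y = 0 := congrArg Subtype.val h
      obtain ⟨x, rfl⟩ := (hfg y).1 h'
      refine ⟨⟨x, fun u hu => ?_⟩, rfl⟩
      apply hf
      rw [hfe, map_smul]
      exact hy u hu
    · rintro ⟨x, hx⟩
      rw [← hx]
      exact Subtype.ext ((hfg _).2 ⟨x.1, rfl⟩)
  · apply LinearMap.ext; intro x; apply Subtype.ext
    show f (τ ϖ x - (χ ϖ : ℂ) • (x : X)) = σ ϖ (f x) - (χ ϖ : ℂ) • f x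
    rw [map_sub, map_smul, hfe]
  · apply LinearMap.ext; intro x; apply Subtype.ext
    show g (σ ϖ x - (χ ϖ : ℂ) • (x : Y)) = ω ϖ (g x) - (χ ϖ : ℂ) • g x
    rw [map_sub, map_smul, hge]

end TMod

section IdxZero

open Aff

variable {K : Type*} [NontriviallyNormedField K]
variable {V : Type*} [AddCommGroup V] [Module ℂ V]

lemma inv_of_T (ρ : Rep K V) (hS : ∀ (b : K) (v : V), ρ (sS b) v = v) (U : Submodule ℂ V)
    (hU : ∀ (u : Kˣ), ∀ v ∈ U, ρ (xT u) v ∈ U) : GRep.Invariant ρ U := by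
  intro g v hv
  rw [aff_decomp g, map_mul, Module.End.mul_apply, hS]
  exact hU _ _ hv

lemma hasIdx_zero (ρ : Rep K V) (hirr : GRep.Irred ρ)
    (hS : ∀ (b : K) (v : V), ρ (sS b) v = v) (χ : Kˣ →* ℂˣ) :
    HasIdx (ρ.comp xTHom) χ 0 := by
  obtain ⟨hnt, hirr⟩ := hirr
  have hτ : ∀ u v, (ρ.comp xTHom) u v = ρ (xT u) v := fun u v => rfl
  set τ : Representation ℂ Kˣ V := ρ.comp xTHom with hτd
  have h1 : GRep.Invariant ρ (tEigenT τ χ) := by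
    refine inv_of_T ρ hS _ fun u v hv => ?_
    intro w
    rw [← hτ, comm_apply, hv w, map_smul]
  have h2 : GRep.Invariant ρ (tTwistKerT τ χ) := by
    refine inv_of_T ρ hS _ fun u v hv => ?_
    have : tTwistKerT τ χ ≤ (tTwistKerT τ χ).comap (τ u) := by
      refine Submodule.span_le.2 ?_
      rintro w ⟨v, x, rfl⟩
      refine Submodule.subset_span ⟨v, τ u x, ?_⟩
      rw [map_sub, map_smul, comm_apply]
    exact this hv
  by_cases htop : tEigenT τ χ = ⊤
  · have htop' : ∀ v u, τ u v = (χ u : ℂ) • v := fun v =>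
      (mem_tEigenT τ χ v).1 (htop ▸ Submodule.mem_top)
    obtain ⟨v, hv⟩ := exists_ne (0 : V)
    have h3 : Submodule.span ℂ {v} = ⊤ := by
      refine (hirr _ ?_).resolve_left ?_
      · refine inv_of_T ρ hS _ fun u w hw => ?_
        rw [← hτ, htop']
        exact Submodule.smul_mem _ _ hw
      · simpa using hv
    have hfin : Module.Finite ℂ V := ⟨⟨{v}, by simpa using h3⟩⟩
    have h4 : tTwistKerT τ χ = ⊥ := by
      rw [eq_bot_iff]
      refine Submodule.span_le.2 ?_
      rintro w ⟨v, x, rfl⟩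
      simp [htop']
    refine ⟨inferInstance, inferInstance, ?_⟩
    rw [htop, h4, finrank_top, (Submodule.quotEquivOfEqBot _ rfl).finrank_eq, add_zero]
  · have hbot := (hirr _ h1).resolve_right htop
    have h4 : tTwistKerT τ χ = ⊤ := by
      refine (hirr _ h2).resolve_left fun h => htop ?_
      rw [eq_top_iff]
      intro v _ u
      have : τ u v - (χ u : ℂ) • v ∈ tTwistKerT τ χ := Submodule.subset_span ⟨u, v, rfl⟩
      rw [h, Submodule.mem_bot, sub_eq_zero] at this
      exact this
    unfold HasIdx
    rw [h4, hbot]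
    have : Subsingleton (V ⧸ (⊤ : Submodule ℂ V)) := ⟨fun a b => by
      obtain ⟨a, rfl⟩ := Submodule.Quotient.mk_surjective _ a
      obtain ⟨b, rfl⟩ := Submodule.Quotient.mk_surjective _ b
      exact (Submodule.Quotient.eq _).2 Submodule.mem_top⟩
    refine ⟨inferInstance, inferInstance, ?_⟩
    rw [Module.finrank_zero_of_subsingleton, finrank_bot]

lemma hasIdx_congr [IsUltrametricDist K] [ProperSpace K]
    {X Y : Type*} [AddCommGroup X] [Module ℂ X] [AddCommGroup Y] [Module ℂ Y]
    {τ : Representation ℂ Kˣ X} {σ : Representation ℂ Kˣ Y}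
    {χ : Kˣ →* ℂˣ} (hτ : TSm τ) (hσ : TSm σ) (hχ : SmoothMulChar χ)
    (e : X ≃ₗ[ℂ] Y) (he : ∀ u x, e (τ u x) = σ u (e x)) {d : ℕ} (h1 : HasIdx τ χ d) :
    HasIdx σ χ d := by
  have h0 : HasIdx (1 : Representation ℂ Kˣ PUnit.{1}) χ 0 := by
    refine ⟨inferInstance, inferInstance, ?_⟩
    rw [Module.finrank_zero_of_subsingleton, Module.finrank_zero_of_subsingleton]
  refine hasIdx_add (ω := (1 : Representation ℂ Kˣ PUnit.{1})) hτ hσ ?_ hχ e.toLinearMap 0 e.injective ?_ ?_ he ?_ h1 h0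
  · intro x; exact Filter.Eventually.of_forall fun u => rfl
  · intro y; exact ⟨0, rfl⟩
  · intro y
    refine ⟨fun _ => e.surjective y, fun _ => rfl⟩
  · intro u x; rfl

end IdxZero

section IdxOne

open Aff

variable {K : Type*} [NontriviallyNormedField K] [IsUltrametricDist K] [ProperSpace K]

lemma lc_of_units {f : Kˣ → ℂ} (h : ∀ x, ∀ᶠ u in nhds (1 : Kˣ), f (x * u) = f x) :
    IsLocallyConstant f := by
  rw [IsLocallyConstant.iff_eventually_eq]
  intro x
  have : Filter.Tendsto (fun y : Kˣ => x⁻¹ * y) (nhds x) (nhds 1) := by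
    have h := (continuous_const_mul x⁻¹).tendsto x
    rwa [inv_mul_cancel] at h
  filter_upwards [this.eventually (h x)] with y hy
  simpa using hy

lemma eventually_norm_one : ∀ᶠ u : Kˣ in nhds (1 : Kˣ), ‖(u : K)‖ = 1 := by
  have h : IsOpen {u : Kˣ | ‖(u : K)‖ = 1} := by
    have := (IsUltrametricDist.isOpen_sphere (0 : K) one_ne_zero).preimage Units.continuous_val
    convert this using 1
    ext u; simp
  exact h.mem_nhds (by show ‖((1 : Kˣ) : K)‖ = 1; simp)

lemma SSx_bound {f : Kˣ → ℂ} (hf : f ∈ SSx K) :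
    ∃ r R : ℝ, 0 < r ∧ 0 < R ∧ ∀ x : Kˣ, f x ≠ 0 → r ≤ ‖(x : K)‖ ∧ ‖(x : K)‖ ≤ R := by
  obtain ⟨C, hC⟩ := hf.2.isCompact.exists_bound_of_continuousOn (f := fun x : Kˣ => (x : K))
    Units.continuous_val.continuousOn
  obtain ⟨D, hD⟩ := hf.2.isCompact.exists_bound_of_continuousOn (f := fun x : Kˣ => ((x⁻¹ : Kˣ) : K))
    (Units.continuous_val.comp continuous_inv).continuousOn
  refine ⟨(max D 1)⁻¹, max C 1, by positivity, by positivity, fun x hx => ?_⟩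
  have hx' : x ∈ tsupport f := subset_closure hx
  refine ⟨?_, (hC x hx').trans (le_max_left _ _)⟩
  have h1 := (hD x hx').trans (le_max_left D 1)
  rw [Units.val_inv_eq_inv_val, norm_inv] at h1
  exact inv_le_of_inv_le₀ (norm_pos_iff.2 x.ne_zero) h1

lemma mem_SSx_of {f : Kˣ → ℂ} (h : ∀ x, ∀ᶠ u in nhds (1 : Kˣ), f (x * u) = f x)
    {r R : ℝ} (hr : 0 < r) (hb : ∀ x : Kˣ, f x ≠ 0 → r ≤ ‖(x : K)‖ ∧ ‖(x : K)‖ ≤ R) :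
    f ∈ SSx K := by
  refine ⟨lc_of_units h, ?_⟩
  exact HasCompactSupport.of_support_subset_isCompact (isCompact_annulus r R hr) fun x hx => hb x hx

/-- the basis functions -/
def delt (χ : Kˣ →* ℂˣ) (ϖ : Kˣ) (n : ℤ) (x : Kˣ) : ℂ :=
  if ‖(x : K)‖ = ‖(ϖ : K)‖ ^ n then (χ (x * ϖ ^ (-n)) : ℂ) else 0

lemma delt_mul (χ : Kˣ →* ℂˣ) (ϖ : Kˣ) (n : ℤ) (x u : Kˣ) (hu : ‖(u : K)‖ = 1) :
    delt χ ϖ n (x * u) = (χ u : ℂ) * delt χ ϖ n x := by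
  unfold delt
  have : ‖((x * u : Kˣ) : K)‖ = ‖(x : K)‖ := by simp [hu]
  rw [this]
  split_ifs
  · rw [mul_right_comm, map_mul]; push_cast; ring
  · simp

lemma delt_shift (χ : Kˣ →* ℂˣ) (ϖ : Kˣ) (n : ℤ) (x : Kˣ) :
    delt χ ϖ (n + 1) (x * ϖ) = delt χ ϖ n x := by
  unfold delt
  have h0 : ‖(ϖ : K)‖ ≠ 0 := norm_ne_zero_iff.2 ϖ.ne_zero
  have : (‖((x * ϖ : Kˣ) : K)‖ = ‖(ϖ : K)‖ ^ (n + 1)) ↔ (‖(x : K)‖ = ‖(ϖ : K)‖ ^ n) := by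
    rw [Units.val_mul, norm_mul, zpow_add_one₀ h0, mul_left_inj' h0]
  have h2 : x * ϖ * ϖ ^ (-(n + 1)) = x * ϖ ^ (-n) := by
    rw [neg_add, zpow_add, mul_assoc]
    simp [mul_comm]
  simp only [this, h2]

lemma delt_mem (χ : Kˣ →* ℂˣ) (hχ : SmoothMulChar χ) (ϖ : Kˣ) (n : ℤ) : delt χ ϖ n ∈ SSx K := by
  refine mem_SSx_of (r := ‖(ϖ : K)‖ ^ n) (R := ‖(ϖ : K)‖ ^ n) ?_ (zpow_pos (norm_pos_iff.2 ϖ.ne_zero) _) ?_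
  · intro x
    have hχ1 : ∀ᶠ u in nhds (1 : Kˣ), χ u = 1 := hχ.mem_nhds (by simp)
    filter_upwards [hχ1, eventually_norm_one] with u h1 h2
    rw [delt_mul _ _ _ _ _ h2, h1]; simp
  · intro x hx
    unfold delt at hx
    split_ifs at hx with h
    · exact ⟨h.ge, h.le⟩
    · exact absurd rfl hx

lemma endIdx_one {M : Type*} [AddCommGroup M] [Module ℂ M] (f : M →ₗ[ℂ] M) (D : ℤ → M) {c : ℂ}
    (hc : c ≠ 0) (hD : ∀ n, f (D (n + 1)) = D n - c • D (n + 1))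
    (hD0 : D 0 ∉ LinearMap.range f) (hker : LinearMap.ker f = ⊥)
    (hspan : ∀ m, m ∈ Submodule.span ℂ (Set.range D)) : EndIdx f 1 := by
  let Z : Submodule ℂ M := Submodule.span ℂ {D 0} ⊔ LinearMap.range f
  have hZφ : ∀ n, D n - c • D (n + 1) ∈ Z := fun n =>
    Submodule.mem_sup_right ⟨_, hD n⟩
  have hDZ : ∀ n : ℤ, D n ∈ Z := by
    intro n
    induction n using Int.induction_on with
    | zero => exact Submodule.mem_sup_left (Submodule.mem_span_singleton_self _)
    | succ i ih =>
      have h := Z.sub_mem ih (hZφ i)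
      rw [sub_sub_cancel] at h
      exact (Z.smul_mem_iff hc).1 h
    | pred i ih =>
      have h := hZφ (-(i : ℤ) - 1)
      rw [sub_add_cancel] at h
      have h2 := Z.add_mem h (Z.smul_mem c ih)
      simpa using h2
  have hZtop : ∀ m, m ∈ Z := by
    intro m
    have : Submodule.span ℂ (Set.range D) ≤ Z := by
      refine Submodule.span_le.2 ?_
      rintro _ ⟨n, rfl⟩
      exact hDZ n
    exact this (hspan m)
  have hfr : Module.finrank ℂ (M ⧸ LinearMap.range f) = 1 := by
    rw [finrank_eq_one_iff_of_nonzero' (Submodule.Quotient.mk (D 0))]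
    · intro w
      obtain ⟨f, rfl⟩ := Submodule.Quotient.mk_surjective _ w
      obtain ⟨y, hy, z, hz, hyz⟩ := Submodule.mem_sup.1 (hZtop f)
      obtain ⟨c, rfl⟩ := Submodule.mem_span_singleton.1 hy
      refine ⟨c, ?_⟩
      rw [← Submodule.Quotient.mk_smul, Submodule.Quotient.eq, ← hyz]
      simpa using hz
    · rw [Ne, Submodule.Quotient.mk_eq_zero]
      exact hD0
  refine ⟨Module.finite_of_finrank_eq_succ hfr, ?_, ?_⟩
  · rw [hker]; infer_instance
  · rw [hfr, hker, finrank_bot]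

lemma hasIdx_one (ψ : AddChar K ℂ) (hψlc : IsLocallyConstant (⇑ψ)) (χ : Kˣ →* ℂˣ)
    (hχ : SmoothMulChar χ) (hsm : TSm ((SRep ψ hψlc).comp xTHom : Representation ℂ Kˣ (SSx K))) :
    HasIdx ((SRep ψ hψlc).comp xTHom : Representation ℂ Kˣ (SSx K)) χ 1 := by
  obtain ⟨ϖ, hϖ1, hϖ⟩ := exists_unif K
  rw [hasIdx_iff _ _ hsm hχ hϖ]
  set τ : Representation ℂ Kˣ (SSx K) := (SRep ψ hψlc).comp xTHom with hτd
  have hτ : ∀ (u : Kˣ) (f : SSx K) (x : Kˣ), (τ u f : Kˣ → ℂ) x = (f : Kˣ → ℂ) (x * u) := by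
    intro u f x
    show ψ (0 * (x : K)) * (f : Kˣ → ℂ) (x * u) = _
    simp
  have hq0 : 0 < ‖(ϖ : K)‖ := norm_pos_iff.2 ϖ.ne_zero
  have hphi : ∀ (f : PP τ χ) (x : Kˣ), ((phi τ χ ϖ f : SSx K) : Kˣ → ℂ) x =
      ((f : SSx K) : Kˣ → ℂ) (x * ϖ) - (χ ϖ : ℂ) * ((f : SSx K) : Kˣ → ℂ) x := by
    intro f x
    rw [phi_val]
    show (τ ϖ f : Kˣ → ℂ) x - _ = _
    rw [hτ]; rfl
  -- vanishing outside a finite range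
  have hvan : ∀ f : SSx K, ∃ N : ℕ, ∀ (n : ℤ) (x : Kˣ), ‖(x : K)‖ = ‖(ϖ : K)‖ ^ n →
      (f : Kˣ → ℂ) x ≠ 0 → -(N : ℤ) < n ∧ n < N := by
    intro f
    obtain ⟨r, R, hr, hR, hb⟩ := SSx_bound f.2
    obtain ⟨N1, hN1⟩ := exists_pow_lt_of_lt_one hr hϖ1
    obtain ⟨N2, hN2⟩ := exists_pow_lt_of_lt_one (inv_pos.2 hR) hϖ1
    refine ⟨max N1 N2, fun n x hx hne => ?_⟩
    obtain ⟨h1, h2⟩ := hb x hne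
    rw [hx] at h1 h2
    constructor
    · by_contra hcon
      have h3 : n ≤ -(N2 : ℤ) := by
        have : (N2 : ℤ) ≤ (max N1 N2 : ℕ) := by exact_mod_cast le_max_right _ _
        omega
      have h4 : ‖(ϖ : K)‖ ^ (-(N2 : ℤ)) ≤ ‖(ϖ : K)‖ ^ n := zpow_le_zpow_right_of_le_one₀ hq0 hϖ1.le h3
      rw [zpow_neg, zpow_natCast] at h4
      have h5 : R < (‖(ϖ : K)‖ ^ N2)⁻¹ := by
        rw [lt_inv_comm₀ hR (pow_pos hq0 _)]; exact hN2
      linarith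
    · by_contra hcon
      have h3 : (N1 : ℤ) ≤ n := by
        have : (N1 : ℤ) ≤ (max N1 N2 : ℕ) := by exact_mod_cast le_max_left _ _
        omega
      have h4 : ‖(ϖ : K)‖ ^ n ≤ ‖(ϖ : K)‖ ^ (N1 : ℤ) := zpow_le_zpow_right_of_le_one₀ hq0 hϖ1.le h3
      rw [zpow_natCast] at h4
      linarith
  have hnp : ∀ n : ℤ, ‖((ϖ ^ n : Kˣ) : K)‖ = ‖(ϖ : K)‖ ^ n := by intro n; simp
  let D : ℤ → PP τ χ := fun n => ⟨⟨delt χ ϖ n, delt_mem χ hχ ϖ n⟩, by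
    intro u hu
    apply Subtype.ext; funext x
    rw [hτ]
    exact delt_mul χ ϖ n x u hu⟩
  have hDv : ∀ n x, ((D n : SSx K) : Kˣ → ℂ) x = delt χ ϖ n x := fun n x => rfl
  have hχ0 : (χ ϖ : ℂ) ≠ 0 := (χ ϖ).ne_zero
  have hDphi : ∀ n, phi τ χ ϖ (D (n + 1)) = D n - (χ ϖ : ℂ) • D (n + 1) := by
    intro n
    apply Subtype.ext; apply Subtype.ext; funext x
    rw [hphi, hDv, delt_shift]
    rfl
  -- kernel
  have hker : LinearMap.ker (phi τ χ ϖ) = ⊥ := by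
    rw [LinearMap.ker_eq_bot']
    intro f hf
    have hstep : ∀ x, ((f : SSx K) : Kˣ → ℂ) (x * ϖ) = (χ ϖ : ℂ) * ((f : SSx K) : Kˣ → ℂ) x := by
      intro x
      have := hphi f x
      rw [hf] at this
      exact (sub_eq_zero.1 this.symm)
    apply Subtype.ext; apply Subtype.ext; funext x
    by_contra hne
    have hne' : ((f : SSx K) : Kˣ → ℂ) x ≠ 0 := hne
    have hall : ∀ n : ℕ, ((f : SSx K) : Kˣ → ℂ) (x * ϖ ^ n) ≠ 0 := by
      intro n
      induction n with
      | zero => simpa using hne'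
      | succ k ih =>
        rw [pow_succ, ← mul_assoc, hstep]
        exact mul_ne_zero hχ0 ih
    obtain ⟨N, hN⟩ := hvan f
    obtain ⟨m, hm⟩ := hϖ x
    have := hN (m + (N + m.natAbs : ℕ)) (x * ϖ ^ (N + m.natAbs)) (by
      rw [zpow_add₀ hq0.ne', zpow_natCast, ← hm]; simp) (hall _)
    push_cast at this
    have := abs_nonneg m
    have := neg_abs_le m
    omega
  have hD0 : D 0 ∉ LinearMap.range (phi τ χ ϖ) := by
    rintro ⟨g, hg⟩
    let a : ℤ → ℂ := fun n => ((g : SSx K) : Kˣ → ℂ) (ϖ ^ n)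
    have ha : ∀ n, a (n + 1) - (χ ϖ : ℂ) * a n = delt χ ϖ 0 (ϖ ^ n) := by
      intro n
      have := hphi g (ϖ ^ n)
      rw [hg, hDv] at this
      rw [this]
      show ((g : SSx K) : Kˣ → ℂ) (ϖ ^ (n + 1)) - _ = _
      rw [zpow_add_one]
    have hd : ∀ n : ℤ, n ≠ 0 → delt χ ϖ 0 (ϖ ^ n) = 0 := by
      intro n hn
      unfold delt
      rw [if_neg]
      rw [hnp]
      intro h
      exact hn (zpow_right_injective₀ hq0 hϖ1.ne h)
    have hd0 : delt χ ϖ 0 (ϖ ^ (0 : ℤ)) = 1 := by simp [delt]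
    obtain ⟨N, hN⟩ := hvan g
    have hz : ∀ n : ℤ, (n ≤ -(N : ℤ) ∨ (N : ℤ) ≤ n) → a n = 0 := by
      intro n hn
      by_contra hne
      have := hN n (ϖ ^ n) (hnp n) hne
      omega
    have hup : ∀ k : ℕ, (k : ℤ) ≤ N → a (-(N : ℤ) + k) = 0 := by
      intro k
      induction k with
      | zero => intro _; exact hz _ (by simp)
      | succ k ih =>
        intro hk
        have h1 := ha (-(N : ℤ) + k)
        rw [ih (by push_cast at hk; omega), hd _ (by push_cast at hk; omega)] at h1
        push_cast
        rw [← add_assoc]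
        simpa using h1
    have hdown : ∀ k : ℕ, (k : ℤ) ≤ N → a (N + 1 - k) = 0 := by
      intro k
      induction k with
      | zero => intro _; exact hz _ (by right; simp)
      | succ k ih =>
        intro hk
        have h1 := ha (N + 1 - ((k + 1 : ℕ) : ℤ))
        rw [hd _ (by push_cast at hk ⊢; omega)] at h1
        have h2 : (N : ℤ) + 1 - ((k + 1 : ℕ) : ℤ) + 1 = N + 1 - k := by push_cast; ring
        rw [h2, ih (by push_cast at hk; omega)] at h1
        simp only [zero_sub, neg_eq_zero, mul_eq_zero, hχ0, false_or] at h1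
        exact h1
    have h1 := hup N le_rfl
    have h2 := hdown N le_rfl
    have h3 := ha 0
    rw [hd0] at h3
    have e1 : -(N : ℤ) + N = 0 := by ring
    have e2 : (N : ℤ) + 1 - N = 0 + 1 := by ring
    rw [e1] at h1
    rw [e2] at h2
    rw [h1, h2] at h3
    simp at h3
  have hZtop : ∀ f, f ∈ Submodule.span ℂ (Set.range D) := by
    intro f
    obtain ⟨N, hN⟩ := hvan f
    have : f = ∑ n ∈ Finset.Ioo (-(N : ℤ)) N, ((f : SSx K) : Kˣ → ℂ) (ϖ ^ n) • D n := by
      apply Subtype.ext; apply Subtype.ext; funext x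
      have hsum : ((∑ n ∈ Finset.Ioo (-(N : ℤ)) N, ((f : SSx K) : Kˣ → ℂ) (ϖ ^ n) • D n : PP τ χ) :
          SSx K).1 x = ∑ n ∈ Finset.Ioo (-(N : ℤ)) N, ((f : SSx K) : Kˣ → ℂ) (ϖ ^ n) * delt χ ϖ n x := by
        simp only [Submodule.coe_sum, Finset.sum_apply]
        rfl
      rw [hsum]
      obtain ⟨m, hm⟩ := hϖ x
      have hxm : x = ϖ ^ m * (x * ϖ ^ (-m)) := by
        rw [zpow_neg, mul_comm x, mul_inv_cancel_left]
      have hu : ‖((x * ϖ ^ (-m) : Kˣ) : K)‖ = 1 := by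
        rw [Units.val_mul, norm_mul, hm, hnp, ← zpow_add₀ hq0.ne']; simp
      have hfx : ((f : SSx K) : Kˣ → ℂ) x = (χ (x * ϖ ^ (-m)) : ℂ) * ((f : SSx K) : Kˣ → ℂ) (ϖ ^ m) := by
        have h1 := f.2 (x * ϖ ^ (-m)) hu
        have h2 := congrFun (congrArg Subtype.val h1) (ϖ ^ m)
        rw [hτ, ← hxm] at h2
        exact h2
      rw [Finset.sum_eq_single m]
      · rw [hfx, delt, if_pos hm, mul_comm]
      · intro n _ hn
        rw [delt, if_neg, mul_zero]
        rw [hm]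
        intro h
        exact hn (zpow_right_injective₀ hq0 hϖ1.ne h).symm
      · intro hmem
        have : ((f : SSx K) : Kˣ → ℂ) (ϖ ^ m) = 0 := by
          by_contra hne
          exact hmem (Finset.mem_Ioo.2 (hN m _ (hnp m) hne))
        rw [this, zero_mul]
    rw [this]
    exact Submodule.sum_mem _ fun n _ => Submodule.smul_mem _ _ (Submodule.subset_span ⟨n, rfl⟩)
  exact endIdx_one _ D hχ0 hDphi hD0 hker hZtop

end IdxOne

section ProjS

open Aff

lemma char_sum {H : Type*} [CommGroup H] (θ : H →* ℂ) (L : Subgroup H) (hL : ∀ h ∈ L, θ h = 1)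
    [Finite (H ⧸ L)] (hne : ∃ h, θ h ≠ 1) : ∑ᶠ q : H ⧸ L, θ q.out = 0 := by
  obtain ⟨h, hh⟩ := hne
  have hcoset : ∀ a b : H, (a : H ⧸ L) = b → θ a = θ b := by
    intro a b hab
    have h1 := hL _ (QuotientGroup.eq.1 hab)
    have : b = a * (a⁻¹ * b) := by simp
    rw [this, map_mul, h1, mul_one]
  have h1 : θ h * ∑ᶠ q : H ⧸ L, θ q.out = ∑ᶠ q : H ⧸ L, θ q.out := by
    rw [mul_finsum]
    rw [← finsum_comp_equiv (Equiv.mulLeft (h : H ⧸ L)) (f := fun q : H ⧸ L => θ q.out)]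
    refine finsum_congr fun q => ?_
    rw [← map_mul]
    apply hcoset
    rw [QuotientGroup.mk_mul, QuotientGroup.out_eq', QuotientGroup.out_eq']
    rfl
  have h2 : (θ h - 1) * ∑ᶠ q : H ⧸ L, θ q.out = 0 := by rw [sub_mul, h1]; ring
  exact (mul_eq_zero.1 h2).resolve_left (sub_ne_zero.2 hh)

variable {K : Type*} [NontriviallyNormedField K]
variable {V : Type*} [AddCommGroup V] [Module ℂ V]

/-- smoothness along the translations -/
def SSm (ρ : Rep K V) : Prop := ∀ v, ∀ᶠ b in nhds (0 : K), ρ (sS b) v = v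

lemma sS_add (b c : K) : (sS (b + c) : Aff K) = sS b * sS c := by
  ext <;> simp [sS]

lemma sS_zero : (sS 0 : Aff K) = 1 := by
  ext <;> simp [sS]

/-- orthogonal complement of a subgroup -/
def perp (ψ : AddChar K ℂ) (M : AddSubgroup K) : AddSubgroup K where
  carrier := {a | ∀ b ∈ M, ψ (a * b) = 1}
  zero_mem' := by intro b _; simp
  add_mem' {x y} hx hy := by
    intro b hb
    rw [add_mul, AddChar.map_add_eq_mul, hx b hb, hy b hb, one_mul]
  neg_mem' {x} hx := by
    intro b hb
    rw [neg_mul, AddChar.map_neg_eq_inv, hx b hb, inv_one]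

lemma mem_perp (ψ : AddChar K ℂ) (M : AddSubgroup K) (a : K) :
    a ∈ perp ψ M ↔ ∀ b ∈ M, ψ (a * b) = 1 := Iff.rfl

/-- twisted coinvariants kernel for the subgroup -/
def VV (ψ : AddChar K ℂ) (ρ : Rep K V) (M : AddSubgroup K) (a : K) : Submodule ℂ V :=
  Submodule.span ℂ {w | ∃ b ∈ M, ∃ x : V, w = ρ (sS b) x - ψ (a * b) • x}

/-- restriction of the representation to translations in `M` -/
def resS (ρ : Rep K V) (M : AddSubgroup K) : Representation ℂ (Multiplicative M) V where
  toFun h := ρ (sS (h.toAdd : K))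
  map_one' := by
    show ρ (sS ((0 : M) : K)) = 1
    simp [sS_zero]
  map_mul' a b := by
    show ρ (sS ((a.toAdd + b.toAdd : M) : K)) = _
    rw [AddSubgroup.coe_add, sS_add, map_mul]

/-- the character of `M` -/
def charS (ψ : AddChar K ℂ) (M : AddSubgroup K) (a : K) : Multiplicative M →* ℂ where
  toFun h := ψ (-(a * (h.toAdd : K)))
  map_one' := by
    show ψ (-(a * ((0 : M) : K))) = 1
    simp
  map_mul' x y := by
    show ψ (-(a * ((x.toAdd + y.toAdd : M) : K))) = _
    rw [AddSubgroup.coe_add, mul_add, neg_add, AddChar.map_add_eq_mul]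

/-- the subgroup of `M` of elements of `N` -/
def subS (M N : AddSubgroup K) : Subgroup (Multiplicative M) where
  carrier := {h | (h.toAdd : K) ∈ N}
  one_mem' := by show ((0 : M) : K) ∈ N; simp
  mul_mem' {a b} ha hb := by
    show ((a.toAdd + b.toAdd : M) : K) ∈ N
    exact N.add_mem ha hb
  inv_mem' {a} ha := by
    show ((-a.toAdd : M) : K) ∈ N
    exact N.neg_mem ha

lemma subS_finite (M N : AddSubgroup K) [CompactSpace M] (hN : IsOpen (N : Set K)) :
    Finite (Multiplicative M ⧸ subS M N) := by
  apply Subgroup.quotient_finite_of_isOpen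
  have hc : Continuous fun h : Multiplicative M => (h.toAdd : K) :=
    continuous_subtype_val.comp continuous_toAdd
  exact hN.preimage hc

lemma projS (ψ : AddChar K ℂ) (hψlc : IsLocallyConstant (⇑ψ)) (ρ : Rep K V) (hS : SSm ρ)
    (M : AddSubgroup K) [CompactSpace M] (a : K) :
    ∃ e : V →ₗ[ℂ] V, (∀ w ∈ VV ψ ρ M a, e w = 0) ∧
      (∀ b ∈ M, ∀ v, ρ (sS b) (e v) = ψ (a * b) • e v) ∧
      (∀ v, v - e v ∈ VV ψ ρ M a) ∧
      (∀ (v : V) (N : AddSubgroup K), IsOpen (N : Set K) → (∀ b ∈ N, ρ (sS b) v = v) →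
        a ∈ perp ψ N → e v = ((Nat.card (Multiplicative M ⧸ subS M N) : ℂ))⁻¹ •
          ∑ᶠ p : Multiplicative M ⧸ subS M N,
            ψ (-(a * (p.out.toAdd : K))) • ρ (sS (p.out.toAdd : K)) v) := by
  have hψ0 : ∀ᶠ b in nhds (0 : K), ψ (-(a * b)) = 1 := by
    have h1 : ∀ᶠ b in nhds (0 : K), ψ b = ψ 0 := hψlc.eventually_eq 0
    have h2 : Filter.Tendsto (fun b : K => -(a * b)) (nhds 0) (nhds 0) := by
      have : Continuous fun b : K => -(a * b) := by fun_prop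
      simpa using this.tendsto 0
    filter_upwards [h2.eventually h1] with b hb
    rw [hb, AddChar.map_zero_eq_one]
  have hinv : ∀ x : K, ψ x * ψ (-x) = 1 := by
    intro x; rw [← AddChar.map_add_eq_mul]; simp
  let τ := twistRep (resS ρ M) (charS ψ M a)
  have hτ : ∀ (h : Multiplicative M) v, τ h v =
      ψ (-(a * (h.toAdd : K))) • ρ (sS (h.toAdd : K)) v := fun h v => rfl
  have hc : Filter.Tendsto (fun h : Multiplicative M => (h.toAdd : K)) (nhds 1) (nhds 0) := by
    have : Continuous fun h : Multiplicative M => (h.toAdd : K) :=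
      continuous_subtype_val.comp continuous_toAdd
    have := this.tendsto 1
    simpa using this
  obtain ⟨e, he1, he2, he3, he4⟩ := exists_avg τ (fun v => by
    apply finite_stab
    filter_upwards [hc.eventually hψ0, hc.eventually (hS v)] with h h1 h2
    rw [hτ, h1, h2, one_smul])
  refine ⟨e, ?_, ?_, ?_, ?_⟩
  · intro w hw
    have : VV ψ ρ M a ≤ LinearMap.ker e := by
      refine Submodule.span_le.2 ?_
      rintro w ⟨b, hb, x, rfl⟩
      have h1 := he1 (Multiplicative.ofAdd ⟨b, hb⟩) x
      rw [hτ, map_smul] at h1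
      change ψ (-(a * b)) • e (ρ (sS b) x) = e x at h1
      rw [SetLike.mem_coe, LinearMap.mem_ker, map_sub, map_smul, ← h1, smul_smul, hinv, one_smul,
        sub_self]
    exact this hw
  · intro b hb v
    have h1 := he2 (Multiplicative.ofAdd ⟨b, hb⟩) v
    rw [hτ] at h1
    change ψ (-(a * b)) • (ρ (sS b) (e v)) = e v at h1
    conv_rhs => rw [← h1]
    rw [smul_smul, hinv, one_smul]
  · intro v
    refine Submodule.span_le.2 ?_ (he3 v)
    rintro w ⟨h, x, rfl⟩
    have : τ h x - x = ψ (-(a * (h.toAdd : K))) • (ρ (sS (h.toAdd : K)) x -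
        ψ (a * (h.toAdd : K)) • x) := by
      rw [hτ, smul_sub, smul_smul, mul_comm (ψ _), hinv, one_smul]
    rw [this]
    exact Submodule.smul_mem _ _ (Submodule.subset_span ⟨_, h.toAdd.2, x, rfl⟩)
  · intro v N hN hfix ha
    rw [he4 v (subS M N) ?_ (subS_finite M N hN)]
    · rfl
    · intro h hh
      rw [mem_stabSub, hτ, hfix _ hh, AddChar.map_neg_eq_inv, ha _ hh, inv_one, one_smul]

lemma keyA (ψ : AddChar K ℂ) (hψlc : IsLocallyConstant (⇑ψ)) (ρ : Rep K V) (hS : SSm ρ)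
    (v0 : V) (N M M0 : AddSubgroup K) [CompactSpace M] [CompactSpace (perp ψ N)]
    (hNo : IsOpen (N : Set K)) (hMo : IsOpen (perp ψ M : Set K))
    (hfix : ∀ b ∈ N, ρ (sS b) v0 = v0)
    (hNN : ∀ b ∈ M, b ∉ N → ∃ a ∈ perp ψ N, ψ (a * b) ≠ 1) (hM0 : M0 ≤ M)
    (hall : ∀ a ∈ perp ψ N, a ∉ perp ψ M0 → v0 ∈ VV ψ ρ M a) :
    ∀ b ∈ M0, ρ (sS b) v0 = v0 := by
  choose e he1 he2 he3 he4 using fun a => projS ψ hψlc ρ hS M a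
  set P := perp ψ N
  haveI := subS_finite M N hNo
  haveI := subS_finite P (perp ψ M) hMo
  haveI := Fintype.ofFinite (Multiplicative M ⧸ subS M N)
  haveI := Fintype.ofFinite (Multiplicative P ⧸ subS P (perp ψ M))
  let w : V := ∑ q : Multiplicative P ⧸ subS P (perp ψ M), e (q.out.toAdd : K) v0
  have hw1 : w = ((Nat.card (Multiplicative M ⧸ subS M N) : ℂ))⁻¹ •
      ((Nat.card (Multiplicative P ⧸ subS P (perp ψ M)) : ℂ) • v0) := by
    have h1 : ∀ q : Multiplicative P ⧸ subS P (perp ψ M), e (q.out.toAdd : K) v0 =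
        ((Nat.card (Multiplicative M ⧸ subS M N) : ℂ))⁻¹ •
          ∑ p : Multiplicative M ⧸ subS M N,
            ψ (-((q.out.toAdd : K) * (p.out.toAdd : K))) • ρ (sS (p.out.toAdd : K)) v0 := by
      intro q
      rw [he4 _ v0 N hNo hfix q.out.toAdd.2, finsum_eq_sum_of_fintype]
    simp only [w]
    rw [Finset.sum_congr rfl fun q _ => h1 q, ← Finset.smul_sum, Finset.sum_comm]
    congr 1
    have hout : ∀ p : Multiplicative M ⧸ subS M N, p.out ∈ subS M N ↔ p = 1 := by
      intro p
      rw [← QuotientGroup.eq_one_iff, QuotientGroup.out_eq']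
    rw [Finset.sum_eq_single (1 : Multiplicative M ⧸ subS M N)]
    · have hm : (((1 : Multiplicative M ⧸ subS M N).out.toAdd : M) : K) ∈ N := (hout 1).2 rfl
      have : ∀ q : Multiplicative P ⧸ subS P (perp ψ M),
          ψ (-((q.out.toAdd : K) * ((1 : Multiplicative M ⧸ subS M N).out.toAdd : K))) •
            ρ (sS ((1 : Multiplicative M ⧸ subS M N).out.toAdd : K)) v0 = v0 := by
        intro q
        rw [hfix _ hm, AddChar.map_neg_eq_inv, q.out.toAdd.2 _ hm, inv_one, one_smul]
      rw [Finset.sum_congr rfl fun q _ => this q, Finset.sum_const, Finset.card_univ,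
        Nat.card_eq_fintype_card, Nat.cast_smul_eq_nsmul]
    · intro p _ hp
      rw [← Finset.sum_smul]
      have hm : ((p.out.toAdd : M) : K) ∉ N := fun h => hp ((hout p).1 h)
      obtain ⟨a, ha, hne⟩ := hNN _ p.out.toAdd.2 hm
      have := char_sum (charS ψ P (p.out.toAdd : K)) (subS P (perp ψ M)) ?_ ?_
      · rw [finsum_eq_sum_of_fintype] at this
        have h2 : ∑ q : Multiplicative P ⧸ subS P (perp ψ M),
            ψ (-((q.out.toAdd : K) * (p.out.toAdd : K))) = 0 := by
          rw [← this]
          refine Finset.sum_congr rfl fun q _ => ?_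
          rw [mul_comm]; rfl
        rw [h2, zero_smul]
      · intro h hh
        show ψ (-(_ * _)) = 1
        rw [mul_comm, AddChar.map_neg_eq_inv, hh _ p.out.toAdd.2, inv_one]
      · refine ⟨Multiplicative.ofAdd ⟨a, ha⟩, ?_⟩
        show ψ (-(_ * a)) ≠ 1
        rw [mul_comm, AddChar.map_neg_eq_inv]
        simpa using hne
    · intro h; exact absurd (Finset.mem_univ _) h
  have hw2 : ∀ b ∈ M0, ρ (sS b) w = w := by
    intro b hb
    simp only [w]
    rw [map_sum]
    refine Finset.sum_congr rfl fun q _ => ?_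
    by_cases hq : (q.out.toAdd : K) ∈ perp ψ M0
    · rw [he2 _ b (hM0 hb), hq b hb, one_smul]
    · rw [he1 _ _ (hall _ q.out.toAdd.2 hq), map_zero]
  intro b hb
  have hc1 : ((Nat.card (Multiplicative M ⧸ subS M N) : ℂ))⁻¹ ≠ 0 :=
    inv_ne_zero (Nat.cast_ne_zero.2 Nat.card_pos.ne')
  have hc2 : (Nat.card (Multiplicative P ⧸ subS P (perp ψ M)) : ℂ) ≠ 0 :=
    Nat.cast_ne_zero.2 Nat.card_pos.ne'
  have := hw2 b hb
  rw [hw1, map_smul, map_smul] at this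
  exact smul_right_injective _ hc2 (smul_right_injective _ hc1 this)

end ProjS

section Func

open Aff

variable {K : Type*} [NontriviallyNormedField K] [IsUltrametricDist K] [ProperSpace K]
variable {V : Type*} [AddCommGroup V] [Module ℂ V]

/-- closed balls as subgroups -/
def bal (β : Kˣ) : AddSubgroup K where
  carrier := {x | ‖x‖ ≤ ‖(β : K)‖}
  zero_mem' := by simp
  add_mem' {x y} hx hy := (IsUltrametricDist.norm_add_le_max x y).trans (max_le hx hy)
  neg_mem' {x} hx := by simpa using hx

lemma mem_bal (β : Kˣ) (x : K) : x ∈ bal β ↔ ‖x‖ ≤ ‖(β : K)‖ := Iff.rfl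

lemma unit_norm_pos (β : Kˣ) : 0 < ‖(β : K)‖ := norm_pos_iff.2 β.ne_zero

instance bal_compact (β : Kˣ) : CompactSpace (bal β) := by
  suffices h : IsCompact ((bal β : AddSubgroup K) : Set K) from isCompact_iff_compactSpace.1 h
  convert isCompact_closedBall (0 : K) ‖(β : K)‖ using 1
  ext x; simp [mem_bal]

lemma bal_mem_nhds (β : Kˣ) : ((bal β : AddSubgroup K) : Set K) ∈ nhds (0 : K) := by
  filter_upwards [Metric.ball_mem_nhds (0 : K) (unit_norm_pos β)] with x hx
  exact (mem_ball_zero_iff.1 hx).le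

lemma bal_open (β : Kˣ) : IsOpen ((bal β : AddSubgroup K) : Set K) :=
  AddSubgroup.isOpen_of_mem_nhds _ (g := 0) (bal_mem_nhds β)

lemma exists_unit_lt {ε : ℝ} (hε : 0 < ε) : ∃ β : Kˣ, ‖(β : K)‖ < ε := by
  obtain ⟨x, hx0, hx⟩ := NormedField.exists_norm_lt K hε
  exact ⟨Units.mk0 x (norm_pos_iff.1 hx0), hx⟩

lemma psi_small (ψ : AddChar K ℂ) (hψlc : IsLocallyConstant (⇑ψ)) :
    ∃ η > 0, ∀ x : K, ‖x‖ < η → ψ x = 1 := by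
  have h1 : ∀ᶠ b in nhds (0 : K), ψ b = ψ 0 := hψlc.eventually_eq 0
  obtain ⟨η, hη, h⟩ := Metric.eventually_nhds_iff.1 h1
  refine ⟨η, hη, fun x hx => ?_⟩
  rw [h (by simpa using hx), AddChar.map_zero_eq_one]

lemma perp_bal_mem (ψ : AddChar K ℂ) {η : ℝ} (h : ∀ x : K, ‖x‖ < η → ψ x = 1) (β : Kˣ)
    (a : K) (ha : ‖a‖ < η / ‖(β : K)‖) : a ∈ perp ψ (bal β) := by
  intro b hb
  apply h
  rw [norm_mul]
  calc ‖a‖ * ‖b‖ ≤ ‖a‖ * ‖(β : K)‖ := mul_le_mul_of_nonneg_left hb (norm_nonneg _)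
    _ < η := (lt_div_iff₀ (unit_norm_pos β)).1 ha

lemma perp_bal_nhds (ψ : AddChar K ℂ) (hψlc : IsLocallyConstant (⇑ψ)) (β : Kˣ) :
    (perp ψ (bal β) : Set K) ∈ nhds (0 : K) := by
  obtain ⟨η, hη, h⟩ := psi_small ψ hψlc
  filter_upwards [Metric.ball_mem_nhds (0 : K) (div_pos hη (unit_norm_pos β))] with x hx
  exact perp_bal_mem ψ h β x (mem_ball_zero_iff.1 hx)

lemma perp_bal_open (ψ : AddChar K ℂ) (hψlc : IsLocallyConstant (⇑ψ)) (β : Kˣ) :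
    IsOpen (perp ψ (bal β) : Set K) :=
  AddSubgroup.isOpen_of_mem_nhds _ (g := 0) (perp_bal_nhds ψ hψlc β)

lemma psi_ne (ψ : AddChar K ℂ) (hψne : ψ ≠ 1) : ∃ t, ψ t ≠ 1 := by
  by_contra! h
  exact hψne (by ext x; simpa using h x)

/-- bound for elements in the orthogonal of a ball -/
lemma perp_bal_bound (ψ : AddChar K ℂ) {t : K} (ht : ψ t ≠ 1) (β : Kˣ) (a : K)
    (ha : a ∈ perp ψ (bal β)) : ‖a‖ * ‖(β : K)‖ ≤ ‖t‖ := by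
  by_contra! h
  have ha0 : a ≠ 0 := by
    rintro rfl
    simp at h
    exact absurd h (not_lt.2 (norm_nonneg _))
  apply ht
  have := ha (t / a) (by
    rw [mem_bal, norm_div, div_le_iff₀ (norm_pos_iff.2 ha0), mul_comm]
    exact h.le)
  rwa [mul_div_cancel₀ _ ha0] at this

lemma perp_bal_compact (ψ : AddChar K ℂ) (hψlc : IsLocallyConstant (⇑ψ)) (hψne : ψ ≠ 1) (β : Kˣ) :
    IsCompact (perp ψ (bal β) : Set K) := by
  obtain ⟨t, ht⟩ := psi_ne ψ hψne
  refine (isCompact_closedBall (0 : K) (‖t‖ / ‖(β : K)‖)).of_isClosed_subset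
    (AddSubgroup.isClosed_of_isOpen _ (perp_bal_open ψ hψlc β)) ?_
  intro a ha
  rw [mem_closedBall_zero_iff, le_div_iff₀ (unit_norm_pos β)]
  exact perp_bal_bound ψ ht β a ha

lemma perp_perp (ψ : AddChar K ℂ) (hψlc : IsLocallyConstant (⇑ψ)) (hψne : ψ ≠ 1) (β : Kˣ)
    (b : K) (hb : b ∉ bal β) : ∃ a ∈ perp ψ (bal β), ψ (a * b) ≠ 1 := by
  by_contra! h
  obtain ⟨t, ht⟩ := psi_ne ψ hψne
  obtain ⟨η, hη, hsm⟩ := psi_small ψ hψlc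
  obtain ⟨a0, ha0⟩ := exists_unit_lt (K := K) (div_pos hη (unit_norm_pos β))
  have ha0' := perp_bal_mem ψ hsm β a0 ha0
  have hβ : (β : K) ≠ 0 := β.ne_zero
  have key : ∀ j : ℕ, (a0 : K) * (b / β) ^ j ∈ perp ψ (bal β) := by
    intro j
    induction j with
    | zero => simpa using ha0'
    | succ j ih =>
      intro n hn
      have h1 : (a0 : K) * (b / β) ^ j * (n / β) ∈ perp ψ (bal β) := by
        intro m hm
        rw [mul_assoc]
        apply ih
        rw [mem_bal, norm_mul, norm_div]
        calc ‖n‖ / ‖(β : K)‖ * ‖m‖ ≤ 1 * ‖(β : K)‖ := by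
              refine mul_le_mul ((div_le_one (unit_norm_pos β)).2 hn) hm (norm_nonneg _) zero_le_one
          _ = _ := one_mul _
      have h2 := h _ h1
      rw [← h2]
      congr 1
      rw [pow_succ]; field_simp
  have hy : 1 < ‖b / (β : K)‖ := by
    rw [norm_div, one_lt_div (unit_norm_pos β)]
    exact not_le.1 hb
  obtain ⟨j, hj⟩ := pow_unbounded_of_one_lt (‖t‖ / (‖(a0 : K)‖ * ‖(β : K)‖)) hy
  have h3 := perp_bal_bound ψ ht β _ (key j)
  rw [div_lt_iff₀ (mul_pos (unit_norm_pos a0) (unit_norm_pos β))] at hj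
  rw [norm_mul, norm_pow] at h3
  linarith

lemma VV_mono (ψ : AddChar K ℂ) (ρ : Rep K V) {M M' : AddSubgroup K} (h : M ≤ M') (a : K) :
    VV ψ ρ M a ≤ VV ψ ρ M' a := by
  refine Submodule.span_mono ?_
  rintro w ⟨b, hb, x, rfl⟩
  exact ⟨b, h hb, x, rfl⟩

lemma VV_congr (ψ : AddChar K ℂ) (ρ : Rep K V) (M : AddSubgroup K) {a a' : K}
    (h : a' - a ∈ perp ψ M) : VV ψ ρ M a' = VV ψ ρ M a := by
  have : ∀ b ∈ M, ψ (a' * b) = ψ (a * b) := by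
    intro b hb
    have e : a' * b = (a' - a) * b + a * b := by ring
    rw [e, AddChar.map_add_eq_mul, h b hb, one_mul]
  unfold VV
  congr 1
  ext w
  constructor
  · rintro ⟨b, hb, x, rfl⟩; exact ⟨b, hb, x, by rw [this b hb]⟩
  · rintro ⟨b, hb, x, rfl⟩; exact ⟨b, hb, x, by rw [this b hb]⟩

lemma exists_func (ψ : AddChar K ℂ) (hψlc : IsLocallyConstant (⇑ψ)) (hψne : ψ ≠ 1)
    (ρ : Rep K V) (hS : SSm ρ) (v0 : V) (b0 : K) (hb0 : ρ (sS b0) v0 ≠ v0) :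
    ∃ a : Kˣ, ∃ l : V →ₗ[ℂ] ℂ, l v0 ≠ 0 ∧ ∀ b v, l (ρ (sS b) v) = ψ (a * b) * l v := by
  obtain ⟨ε, hε, hfix⟩ := Metric.eventually_nhds_iff.1 (hS v0)
  obtain ⟨β, hβ⟩ := exists_unit_lt (K := K) hε
  have hb00 : b0 ≠ 0 := by
    rintro rfl
    apply hb0; rw [sS_zero]; simp
  let γ : Kˣ := Units.mk0 b0 hb00
  obtain ⟨c', hc'⟩ := NormedField.exists_one_lt_norm K
  let c : Kˣ := Units.mk0 c' (norm_pos_iff.1 (zero_lt_one.trans hc'))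
  have hc : 1 < ‖(c : K)‖ := hc'
  let M : ℕ → AddSubgroup K := fun k => bal (γ * c ^ k)
  have hMn : ∀ k, ‖((γ * c ^ k : Kˣ) : K)‖ = ‖b0‖ * ‖(c : K)‖ ^ k := by
    intro k; simp [γ]
  have hMmono : Monotone M := by
    intro i j hij x hx
    rw [mem_bal, hMn] at hx ⊢
    exact hx.trans (mul_le_mul_of_nonneg_left (pow_le_pow_right₀ hc.le hij) (norm_nonneg _))
  have hMex : ∀ x, ∃ k, x ∈ M k := by
    intro x
    obtain ⟨k, hk⟩ := pow_unbounded_of_one_lt (‖x‖ / ‖b0‖) hc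
    refine ⟨k, ?_⟩
    rw [mem_bal, hMn]
    rw [div_lt_iff₀ (norm_pos_iff.2 hb00)] at hk
    linarith
  have hPc := perp_bal_compact ψ hψlc hψne β
  haveI : CompactSpace (perp ψ (bal β)) := isCompact_iff_compactSpace.1 hPc
  have hPcl := hPc.isClosed
  let C : ℕ → Set K := fun k => (perp ψ (bal β) : Set K) ∩
    ((perp ψ (M 0) : Set K)ᶜ ∩ {a | v0 ∉ VV ψ ρ (M k) a})
  have hclosed : ∀ k, IsClosed (C k) := by
    intro k
    refine hPcl.inter ((perp_bal_open ψ hψlc _).isClosed_compl.inter ?_)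
    rw [← isOpen_compl_iff, isOpen_iff_mem_nhds]
    intro a ha
    have h1 : Filter.Tendsto (fun x : K => x - a) (nhds a) (nhds 0) := by
      have : Continuous fun x : K => x - a := by fun_prop
      simpa using this.tendsto a
    filter_upwards [h1 (perp_bal_nhds ψ hψlc (γ * c ^ k))] with x hx
    simp only [Set.mem_compl_iff, Set.mem_setOf_eq, not_not] at ha ⊢
    rw [VV_congr ψ ρ (M k) hx]
    exact ha
  have hne : (⋂ k, C k).Nonempty := by
    apply IsCompact.nonempty_iInter_of_sequence_nonempty_isCompact_isClosed
    · rintro k a ⟨h1, h2, h3⟩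
      exact ⟨h1, h2, fun h => h3 (VV_mono ψ ρ (hMmono (Nat.le_succ k)) a h)⟩
    · intro k
      by_contra hemp
      apply hb0
      refine keyA ψ hψlc ρ hS v0 (bal β) (M k) (M 0) (bal_open β) (perp_bal_open ψ hψlc _) ?_
        (fun b _ hb => perp_perp ψ hψlc hψne β b hb) (hMmono (Nat.zero_le k)) ?_ b0 ?_
      · intro b hb
        apply hfix
        rw [dist_zero_right]
        exact lt_of_le_of_lt hb hβ
      · intro a ha1 ha2
        by_contra h
        exact hemp ⟨a, ha1, ha2, h⟩
      · rw [mem_bal, hMn]; simp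
    · exact hPc.of_isClosed_subset (hclosed 0) Set.inter_subset_left
    · exact hclosed
  obtain ⟨a, ha⟩ := hne
  rw [Set.mem_iInter] at ha
  have ha0 : a ≠ 0 := by
    rintro rfl
    exact (ha 0).2.1 (AddSubgroup.zero_mem _)
  have hnot : v0 ∉ VV ψ ρ ⊤ a := by
    intro h
    have : ∃ k, v0 ∈ VV ψ ρ (M k) a := by
      refine Submodule.span_induction (p := fun w _ => ∃ k, w ∈ VV ψ ρ (M k) a) ?_ ?_ ?_ ?_ h
      · rintro w ⟨b, -, x, rfl⟩
        obtain ⟨k, hk⟩ := hMex b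
        exact ⟨k, Submodule.subset_span ⟨b, hk, x, rfl⟩⟩
      · exact ⟨0, Submodule.zero_mem _⟩
      · rintro x y - - ⟨i, hi⟩ ⟨j, hj⟩
        exact ⟨max i j, Submodule.add_mem _ (VV_mono ψ ρ (hMmono (le_max_left _ _)) a hi)
          (VV_mono ψ ρ (hMmono (le_max_right _ _)) a hj)⟩
      · rintro z x - ⟨i, hi⟩
        exact ⟨i, Submodule.smul_mem _ _ hi⟩
    obtain ⟨k, hk⟩ := this
    exact (ha k).2.2 hk
  obtain ⟨l, hl1, hl2⟩ := Submodule.exists_le_ker_of_notMem hnot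
  refine ⟨Units.mk0 a ha0, l, hl1, fun b v => ?_⟩
  have h1 : ρ (sS b) v - ψ (a * b) • v ∈ LinearMap.ker l :=
    hl2 (Submodule.subset_span ⟨b, trivial, v, rfl⟩)
  rw [LinearMap.mem_ker, map_sub, map_smul, sub_eq_zero] at h1
  exact h1

end Func

section SIrred

open Aff

variable {K : Type*} [NontriviallyNormedField K] [IsUltrametricDist K] [ProperSpace K]

lemma SSm_of_le (ψ : AddChar K ℂ) (hψlc : IsLocallyConstant (⇑ψ)) (U : Submodule ℂ (Kˣ → ℂ))
    (hU : GRep.Invariant (repCx K ψ) U) (hle : U ≤ SSx K) : SSm (GRep.sub (repCx K ψ) hU) := by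
  intro f
  obtain ⟨r, R, hr, hR, hb⟩ := SSx_bound (hle f.2)
  obtain ⟨η, hη, hsm⟩ := psi_small ψ hψlc
  filter_upwards [Metric.ball_mem_nhds (0 : K) (div_pos hη hR)] with b hb'
  rw [mem_ball_zero_iff] at hb'
  apply Subtype.ext; funext x
  show ψ (b * (x : K)) * f.1 (x * 1) = f.1 x
  rw [mul_one]
  by_cases hx : f.1 x = 0
  · rw [hx, mul_zero]
  · rw [hsm, one_mul]
    rw [norm_mul]
    calc ‖b‖ * ‖(x : K)‖ ≤ ‖b‖ * R := mul_le_mul_of_nonneg_left (hb x hx).2 (norm_nonneg _)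
      _ < η := (lt_div_iff₀ hR).1 hb'

lemma mul_ind_mem (ψ : AddChar K ℂ) (hψlc : IsLocallyConstant (⇑ψ)) (U : Submodule ℂ (Kˣ → ℂ))
    (hU : GRep.Invariant (repCx K ψ) U) (hle : U ≤ SSx K) (β : Kˣ) (a : K) (f : Kˣ → ℂ)
    (hf : f ∈ U) : (fun x : Kˣ => if (x : K) - a ∈ perp ψ (bal β) then f x else 0) ∈ U := by
  set ρ := GRep.sub (repCx K ψ) hU with hρd
  have hρ : ∀ (b : K) (f : U) (x : Kˣ), (ρ (sS b) f).1 x = ψ (b * (x : K)) * f.1 x := by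
    intro b f x
    show ψ (b * (x : K)) * f.1 (x * 1) = _
    rw [mul_one]
  obtain ⟨e, -, he2, he3, -⟩ := projS ψ hψlc ρ (SSm_of_le ψ hψlc U hU hle) (bal β) a
  convert (e ⟨f, hf⟩).2 using 1
  funext x
  have key : ∀ b, ψ (b * (x : K)) = ψ (((x : K) - a) * b) * ψ (a * b) := by
    intro b
    rw [← AddChar.map_add_eq_mul]; congr 1; ring
  split_ifs with hx
  · have : ∀ g : U, g ∈ VV ψ ρ (bal β) a → g.1 x = 0 := by
      intro g hg
      refine Submodule.span_induction (p := fun (w : U) _ => w.1 x = 0) ?_ rfl ?_ ?_ hg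
      · rintro w ⟨b, hb, y, rfl⟩
        show (ρ (sS b) y).1 x - ψ (a * b) * y.1 x = 0
        rw [hρ, key, hx b hb, one_mul, sub_self]
      · intro g h _ _ h1 h2
        show g.1 x + h.1 x = 0
        rw [h1, h2, add_zero]
      · intro z g _ h1
        show z * g.1 x = 0
        rw [h1, mul_zero]
    have h := this _ (he3 ⟨f, hf⟩)
    exact sub_eq_zero.1 h
  · rw [mem_perp] at hx
    push_neg at hx
    obtain ⟨b, hb, hne⟩ := hx
    have h1 := congrFun (congrArg Subtype.val (he2 b hb ⟨f, hf⟩)) x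
    rw [hρ] at h1
    change _ = ψ (a * b) * (e ⟨f, hf⟩).1 x at h1
    rw [key] at h1
    have h0 : ψ (a * b) ≠ 0 := by
      intro h
      have : ψ (a * b) * ψ (-(a * b)) = 1 := by rw [← AddChar.map_add_eq_mul]; simp
      rw [h, zero_mul] at this
      exact zero_ne_one this
    have h2 : (ψ (((x : K) - a) * b) - 1) * (ψ (a * b) * (e ⟨f, hf⟩).1 x) = 0 := by
      rw [sub_mul, ← mul_assoc, h1]; ring
    have h3 := (mul_eq_zero.1 h2).resolve_left (sub_ne_zero.2 hne)
    exact ((mul_eq_zero.1 h3).resolve_left h0).symm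

lemma SSx_le (ψ : AddChar K ℂ) (hψlc : IsLocallyConstant (⇑ψ)) (hψne : ψ ≠ 1)
    (U : Submodule ℂ (Kˣ → ℂ))
    (hU : GRep.Invariant (repCx K ψ) U) (hle : U ≤ SSx K) (hne : U ≠ ⊥) : SSx K ≤ U := by
  obtain ⟨f, hf, hf0⟩ := U.ne_bot_iff.1 hne
  obtain ⟨x0, hx0⟩ := Function.ne_iff.1 hf0
  obtain ⟨t, ht⟩ := psi_ne ψ hψne
  intro g hg
  have main := hg.2.isCompact.induction_on
    (p := fun s => ∃ φ : Kˣ → ℂ, (∀ h ∈ U, φ * h ∈ U) ∧ φ * g ∈ U ∧ ∀ x ∈ s, φ x = 1) ?_ ?_ ?_ ?_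
  · obtain ⟨φ, -, h2, h3⟩ := main
    convert h2 using 1
    funext x
    by_cases hx : x ∈ tsupport g
    · simp [h3 x hx]
    · simp [image_eq_zero_of_notMem_tsupport hx]
  · exact ⟨0, fun h _ => by simp, by simp, fun x hx => hx.elim⟩
  · rintro s s' hss ⟨φ, h1, h2, h3⟩
    exact ⟨φ, h1, h2, fun x hx => h3 x (hss hx)⟩
  · rintro s s' ⟨φ, h1, h2, h3⟩ ⟨φ', h1', h2', h3'⟩
    refine ⟨φ + φ' - φ * φ', fun h hh => ?_, ?_, ?_⟩
    · have : (φ + φ' - φ * φ') * h = φ * h + φ' * h - φ * (φ' * h) := by ring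
      rw [this]
      exact U.sub_mem (U.add_mem (h1 h hh) (h1' h hh)) (h1 _ (h1' h hh))
    · have : (φ + φ' - φ * φ') * g = φ * g + φ' * g - φ * (φ' * g) := by ring
      rw [this]
      exact U.sub_mem (U.add_mem h2 h2') (h1 _ h2')
    · rintro x (hx | hx)
      · simp [h3 x hx]
      · simp [h3' x hx]
  · intro x _
    -- translate of f
    let f1 : Kˣ → ℂ := repCx K ψ (xT (x⁻¹ * x0)) f
    have hf1U : f1 ∈ U := hU _ _ hf
    have hf1 : ∀ y, f1 y = f (y * (x⁻¹ * x0)) := by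
      intro y
      show ψ (0 * (y : K)) * f (y * (x⁻¹ * x0)) = _
      simp
    have hf1x : f1 x ≠ 0 := by rw [hf1]; simpa using hx0
    have hlc : ∀ᶠ y in nhds x, f1 y = f1 x ∧ g y = g x :=
      ((hle hf1U).1.eventually_eq x).and (hg.1.eventually_eq x)
    rw [Units.isEmbedding_val₀.nhds_eq_comap, Filter.eventually_comap] at hlc
    obtain ⟨ε, hε, hlc⟩ := Metric.eventually_nhds_iff.1 hlc
    obtain ⟨δ, hδ⟩ := exists_unit_lt (K := K) (div_pos hε (show 0 < ‖t‖ + 1 by positivity))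
    have hcl : ∀ y : Kˣ, (y : K) - x ∈ perp ψ (bal δ⁻¹) → f1 y = f1 x ∧ g y = g x := by
      intro y hy
      refine hlc ?_ y rfl
      have h1 := perp_bal_bound ψ ht δ⁻¹ _ hy
      rw [Units.val_inv_eq_inv_val, norm_inv, ← div_eq_mul_inv, div_le_iff₀ (unit_norm_pos δ)] at h1
      rw [dist_eq_norm]
      rw [lt_div_iff₀ (by positivity)] at hδ
      have := unit_norm_pos δ
      nlinarith
    let φ : Kˣ → ℂ := fun y => if (y : K) - x ∈ perp ψ (bal δ⁻¹) then 1 else 0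
    have hφU : ∀ h ∈ U, φ * h ∈ U := by
      intro h hh
      convert mul_ind_mem ψ hψlc U hU hle δ⁻¹ x h hh using 1
      funext y
      simp [φ]
    refine ⟨{y | (y : K) - x ∈ perp ψ (bal δ⁻¹)}, mem_nhdsWithin_of_mem_nhds ?_, φ, hφU, ?_, ?_⟩
    · have h1 : Filter.Tendsto (fun y : Kˣ => (y : K) - x) (nhds x) (nhds 0) := by
        have : Continuous fun y : Kˣ => (y : K) - x := Units.continuous_val.sub continuous_const
        simpa using this.tendsto x
      exact h1 (perp_bal_nhds ψ hψlc δ⁻¹)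
    · have : φ * g = (g x / f1 x) • (φ * f1) := by
        funext y
        simp only [Pi.mul_apply, Pi.smul_apply, smul_eq_mul, φ]
        split_ifs with hy
        · rw [(hcl y hy).1, (hcl y hy).2]; field_simp
        · simp
      rw [this]
      exact U.smul_mem _ (hφU _ hf1U)
    · intro y hy
      exact if_pos hy

end SIrred

section Classify

open Aff

variable {K : Type*} [NontriviallyNormedField K] [IsUltrametricDist K] [ProperSpace K]
variable {V : Type*} [AddCommGroup V] [Module ℂ V]

lemma xT_mul (u w : Kˣ) : (xT (u * w) : Aff K) = xT u * xT w := by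
  ext <;> simp [xT]

lemma xT_sS (u : Kˣ) (b : K) : (xT u : Aff K) * sS b = sS ((u : K) * b) * xT u := by
  rw [mul_sS]; rfl

lemma iso_S (ψ : AddChar K ℂ) (hψlc : IsLocallyConstant (⇑ψ)) (hψne : ψ ≠ 1)
    (ρ : Rep K V) (hirr : GRep.Irred ρ) (hT : TSm (ρ.comp xTHom : Representation ℂ Kˣ V))
    (hS : SSm ρ) (hnt : ¬ ∀ (b : K) (v : V), ρ (sS b) v = v) : GRep.Iso ρ (SRep ψ hψlc) := by
  push_neg at hnt
  obtain ⟨b0, v0, hb0⟩ := hnt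
  obtain ⟨a, l, hl0, hl⟩ := exists_func ψ hψlc hψne ρ hS v0 b0 hb0
  let Φ : V →ₗ[ℂ] (Kˣ → ℂ) := LinearMap.pi fun x => l.comp (ρ (xT (x * a⁻¹)))
  have hΦ : ∀ v x, Φ v x = l (ρ (xT (x * a⁻¹)) v) := fun v x => rfl
  have hΦT : ∀ u v x, Φ (ρ (xT u) v) x = Φ v (x * u) := by
    intro u v x
    rw [hΦ, hΦ, ← Module.End.mul_apply, ← map_mul, ← xT_mul]
    congr 4
    exact mul_right_comm _ _ _
  have hΦS : ∀ b v x, Φ (ρ (sS b) v) x = ψ (b * (x : K)) * Φ v x := by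
    intro b v x
    rw [hΦ, hΦ, ← Module.End.mul_apply, ← map_mul, xT_sS, map_mul, Module.End.mul_apply, hl]
    congr 2
    rw [Units.val_mul, Units.val_inv_eq_inv_val]
    field_simp
  have hequiv : GRep.Equivariant ρ (repCx K ψ) Φ := by
    intro g v
    have hg : g = sS g.s * xT g.t := by ext <;> simp [sS, xT]
    funext x
    rw [repCx_apply]
    conv_lhs => rw [hg]
    rw [map_mul, Module.End.mul_apply, hΦS, hΦT]
  obtain ⟨t, ht⟩ := psi_ne ψ hψne
  obtain ⟨η, hη, hsm⟩ := psi_small ψ hψlc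
  have hzero : ∀ v, ∃ r > 0, ∀ x : Kˣ, Φ v x ≠ 0 → r ≤ ‖(x : K)‖ := by
    have htop : sCoinvKer ρ = ⊤ := by
      refine (hirr.2 _ (sCoinvKer_invariant ρ)).resolve_left fun h => hb0 ?_
      have : ρ (sS b0) v0 - v0 ∈ sCoinvKer ρ := Submodule.subset_span ⟨b0, v0, rfl⟩
      rw [h, Submodule.mem_bot, sub_eq_zero] at this
      exact this
    intro v
    have hv : v ∈ sCoinvKer ρ := htop ▸ Submodule.mem_top
    refine Submodule.span_induction
      (p := fun v _ => ∃ r > 0, ∀ x : Kˣ, Φ v x ≠ 0 → r ≤ ‖(x : K)‖) ?_ ?_ ?_ ?_ hv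
    · rintro w ⟨b, v, rfl⟩
      refine ⟨η / (‖b‖ + 1), by positivity, fun x hx => ?_⟩
      by_contra! hlt
      apply hx
      rw [map_sub, Pi.sub_apply, hΦS, hsm, one_mul, sub_self]
      rw [norm_mul]
      rw [lt_div_iff₀ (by positivity)] at hlt
      have := unit_norm_pos x
      nlinarith
    · exact ⟨1, one_pos, fun x hx => absurd (by simp) hx⟩
    · rintro v w - - ⟨r, hr, h1⟩ ⟨r', hr', h2⟩
      refine ⟨min r r', lt_min hr hr', fun x hx => ?_⟩
      by_contra! hlt
      rw [lt_min_iff] at hlt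
      apply hx
      have e1 : Φ v x = 0 := by
        by_contra h
        exact absurd (h1 x h) (not_le.2 hlt.1)
      have e2 : Φ w x = 0 := by
        by_contra h
        exact absurd (h2 x h) (not_le.2 hlt.2)
      rw [map_add, Pi.add_apply, e1, e2, add_zero]
    · rintro z v - ⟨r, hr, h1⟩
      refine ⟨r, hr, fun x hx => h1 x fun h => hx ?_⟩
      rw [map_smul, Pi.smul_apply, h, smul_zero]
  have hmem : ∀ v, Φ v ∈ SSx K := by
    intro v
    obtain ⟨r, hr, h1⟩ := hzero v
    obtain ⟨ε, hε, hfix⟩ := Metric.eventually_nhds_iff.1 (hS v)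
    refine mem_SSx_of (r := r) (R := ‖t‖ / ε) ?_ hr ?_
    · intro x
      filter_upwards [hT v] with u hu
      rw [← hΦT]
      exact congrFun (congrArg Φ hu) x
    · intro x hx
      refine ⟨h1 x hx, ?_⟩
      by_contra! hlt
      rw [div_lt_iff₀ hε, mul_comm, ← div_lt_iff₀ (unit_norm_pos x)] at hlt
      have h2 : ρ (sS (t / x)) v = v := by
        apply hfix
        rw [dist_zero_right, norm_div]
        exact hlt
      have h3 := hΦS (t / x) v x
      rw [h2, div_mul_cancel₀ _ x.ne_zero] at h3
      exact ht (mul_right_cancel₀ hx (by rw [one_mul]; exact h3.symm))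
  have hne : Φ v0 ≠ 0 := by
    intro h
    have := congrFun h a
    rw [hΦ] at this
    apply hl0
    rw [mul_inv_cancel] at this
    have e : (xT (1 : Kˣ) : Aff K) = 1 := rfl
    rw [e, map_one] at this
    exact this
  have hker : LinearMap.ker Φ = ⊥ := by
    refine (hirr.2 _ (GRep.ker_invariant _ _ Φ hequiv)).resolve_right fun h => hne ?_
    have : v0 ∈ LinearMap.ker Φ := h ▸ Submodule.mem_top
    exact this
  have hsurj : SSx K ≤ LinearMap.range Φ := by
    refine SSx_le ψ hψlc hψne _ (GRep.range_invariant _ _ Φ hequiv) ?_ ?_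
    · rintro _ ⟨v, rfl⟩; exact hmem v
    · intro h
      have : Φ v0 ∈ LinearMap.range Φ := ⟨v0, rfl⟩
      rw [h] at this
      exact hne this
  refine ⟨LinearEquiv.ofBijective (Φ.codRestrict (SSx K) hmem) ⟨?_, ?_⟩, ?_⟩
  · intro v w h
    exact LinearMap.ker_eq_bot.1 hker (congrArg Subtype.val h)
  · intro f
    obtain ⟨v, hv⟩ := hsurj f.2
    exact ⟨v, Subtype.ext hv⟩
  · intro g v
    apply Subtype.ext
    exact hequiv g v

end Classify

section Assembly

open Aff

variable {K : Type*} [NontriviallyNormedField K]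
variable {V : Type*} [AddCommGroup V] [Module ℂ V]

lemma tsm_of_smooth (ρ : Rep K V) (hρ : IsSmoothRep ρ) :
    TSm (ρ.comp xTHom : Representation ℂ Kˣ V) := by
  intro v
  have hc : Continuous (xT : Kˣ → Aff K) :=
    continuous_induced_rng.2 (continuous_id.prodMk continuous_const)
  refine ((hρ v).preimage hc).mem_nhds ?_
  show ρ (xT 1) v = v
  have e : (xT (1 : Kˣ) : Aff K) = 1 := rfl
  rw [e]; simp

lemma ssm_of_smooth (ρ : Rep K V) (hρ : IsSmoothRep ρ) : SSm ρ := by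
  intro v
  have hc : Continuous (sS : K → Aff K) :=
    continuous_induced_rng.2 (continuous_const.prodMk continuous_id)
  refine ((hρ v).preimage hc).mem_nhds ?_
  show ρ (sS 0) v = v
  rw [sS_zero]; simp

lemma tsm_sub (ρ : Rep K V) (h : TSm (ρ.comp xTHom : Representation ℂ Kˣ V)) {U : Submodule ℂ V}
    (hU : GRep.Invariant ρ U) : TSm ((GRep.sub ρ hU).comp xTHom : Representation ℂ Kˣ U) := by
  intro v
  filter_upwards [h v] with u hu
  exact Subtype.ext hu

lemma ssm_sub (ρ : Rep K V) (h : SSm ρ) {U : Submodule ℂ V}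
    (hU : GRep.Invariant ρ U) : SSm (GRep.sub ρ hU) := by
  intro v
  filter_upwards [h v] with u hu
  exact Subtype.ext hu

lemma tsm_quot (ρ : Rep K V) (h : TSm (ρ.comp xTHom : Representation ℂ Kˣ V)) (U : Submodule ℂ V)
    (hU : GRep.Invariant ρ U) :
    TSm ((GRep.quot ρ U hU).comp xTHom : Representation ℂ Kˣ (V ⧸ U)) := by
  intro v
  obtain ⟨v, rfl⟩ := Submodule.Quotient.mk_surjective _ v
  filter_upwards [h v] with u hu
  exact congrArg Submodule.Quotient.mk hu

lemma ssm_quot (ρ : Rep K V) (h : SSm ρ) (U : Submodule ℂ V)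
    (hU : GRep.Invariant ρ U) : SSm (GRep.quot ρ U hU) := by
  intro v
  obtain ⟨v, rfl⟩ := Submodule.Quotient.mk_surjective _ v
  filter_upwards [h v] with u hu
  exact congrArg Submodule.Quotient.mk hu

lemma irred_subquot (ρ : Rep K V) {A B : Submodule ℂ V} (hA : GRep.Invariant ρ A)
    (hB : GRep.Invariant ρ B) (hlt : A < B)
    (hmax : ∀ C : Submodule ℂ V, GRep.Invariant ρ C → A ≤ C → C ≤ B → C = A ∨ C = B) :
    GRep.Irred (GRep.subquot ρ hA hB) := by
  constructor
  · apply Submodule.Quotient.nontrivial_iff.2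
    intro h
    apply hlt.not_ge
    intro x hx
    have : (⟨x, hx⟩ : B) ∈ A.comap B.subtype := h ▸ Submodule.mem_top
    exact this
  · intro U hU
    let C : Submodule ℂ V := (U.comap (A.comap B.subtype).mkQ).map B.subtype
    have hmC : ∀ x : B, (x : V) ∈ C ↔ Submodule.Quotient.mk x ∈ U := by
      intro x
      constructor
      · rintro ⟨y, hy, hyx⟩
        have : y = x := Subtype.ext hyx
        rw [← this]; exact hy
      · intro h; exact ⟨x, h, rfl⟩
    have hCB : C ≤ B := by
      rintro _ ⟨y, -, rfl⟩; exact y.2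
    have hAC : A ≤ C := by
      intro x hx
      refine (hmC ⟨x, hlt.le hx⟩).2 ?_
      have : (Submodule.Quotient.mk (⟨x, hlt.le hx⟩ : B) : B ⧸ A.comap B.subtype) = 0 :=
        (Submodule.Quotient.mk_eq_zero _).2 hx
      rw [this]; exact U.zero_mem
    have hC : GRep.Invariant ρ C := by
      rintro g _ ⟨y, hy, rfl⟩
      exact ⟨GRep.sub ρ hB g y, hU g _ hy, rfl⟩
    rcases hmax C hC hAC hCB with h | h
    · left
      rw [eq_bot_iff]
      intro x hx
      obtain ⟨x, rfl⟩ := Submodule.Quotient.mk_surjective _ x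
      have h1 := (hmC x).2 hx
      rw [h] at h1
      exact (Submodule.Quotient.mk_eq_zero _).2 h1
    · right
      rw [eq_top_iff]
      intro x _
      obtain ⟨x, rfl⟩ := Submodule.Quotient.mk_surjective _ x
      refine (hmC x).1 ?_
      rw [h]
      exact x.2

end Assembly

section Assembly2

open Aff

variable {K : Type*} [NontriviallyNormedField K] [IsUltrametricDist K] [ProperSpace K]
variable {V : Type*} [AddCommGroup V] [Module ℂ V]

lemma hasIdx_irred (ψ : AddChar K ℂ) (hψlc : IsLocallyConstant (⇑ψ)) (hψne : ψ ≠ 1)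
    (ρ : Rep K V) (hirr : GRep.Irred ρ) (hT : TSm (ρ.comp xTHom : Representation ℂ Kˣ V))
    (hS : SSm ρ) (χ : Kˣ →* ℂˣ) (hχ : SmoothMulChar χ) :
    HasIdx (ρ.comp xTHom) χ (if GRep.Iso ρ (SRep ψ hψlc) then 1 else 0) := by
  split_ifs with h
  · obtain ⟨e, he⟩ := h
    have he' : ∀ g f, e.symm (SRep ψ hψlc g f) = ρ g (e.symm f) := by
      intro g f
      rw [LinearEquiv.symm_apply_eq, he, e.apply_symm_apply]
    have hsm : TSm ((SRep ψ hψlc).comp xTHom : Representation ℂ Kˣ (SSx K)) := by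
      intro f
      filter_upwards [hT (e.symm f)] with u hu
      have h1 := he (xT u) (e.symm f)
      rw [e.apply_symm_apply] at h1
      have h2 : ρ (xT u) (e.symm f) = e.symm f := hu
      rw [h2, e.apply_symm_apply] at h1
      exact h1.symm
    exact hasIdx_congr hsm hT hχ e.symm (fun u f => he' (xT u) f) (hasIdx_one ψ hψlc χ hχ hsm)
  · refine hasIdx_zero ρ hirr ?_ χ
    by_contra hnt
    exact h (iso_S ψ hψlc hψne ρ hirr hT hS hnt)

lemma hasIdx_chain (ψ : AddChar K ℂ) (hψlc : IsLocallyConstant (⇑ψ)) (hψne : ψ ≠ 1)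
    (ρ : Rep K V) (hρ : IsSmoothRep ρ) (c : CompSeries ρ)
    (χ : Kˣ →* ℂˣ) (hχ : SmoothMulChar χ) (i : ℕ) (hi : i ≤ c.n) :
    HasIdx ((GRep.sub ρ (c.inv i)).comp xTHom) χ (∑ j ∈ Finset.range i,
      if GRep.Iso (GRep.subquot ρ (c.inv j) (c.inv (j + 1))) (SRep ψ hψlc) then 1 else 0) := by
  have hT := tsm_of_smooth ρ hρ
  have hS := ssm_of_smooth ρ hρ
  induction i with
  | zero =>
    have : Subsingleton (c.W 0) := by rw [c.bot]; infer_instance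
    refine ⟨inferInstance, inferInstance, ?_⟩
    rw [Module.finrank_zero_of_subsingleton, Module.finrank_zero_of_subsingleton]
    simp
  | succ i ih =>
    rw [Finset.sum_range_succ]
    have hle : c.W i ≤ c.W (i + 1) := (c.lt i (by omega)).le
    refine hasIdx_add (tsm_sub ρ hT _) (tsm_sub ρ hT _) (tsm_quot _ (tsm_sub ρ hT _) _ _) hχ
      (Submodule.inclusion hle) (((c.W i).comap (c.W (i + 1)).subtype).mkQ)
      (Submodule.inclusion_injective hle) (Submodule.mkQ_surjective _) ?_ ?_ ?_
      (ih (by omega))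
      (hasIdx_irred ψ hψlc hψne (GRep.subquot ρ (c.inv i) (c.inv (i + 1)))
        (irred_subquot ρ _ _ (c.lt i (by omega)) (c.maximal i (by omega)))
        (tsm_quot _ (tsm_sub ρ hT _) _ _) (ssm_quot _ (ssm_sub ρ hS _) _ _) χ hχ)
    · intro y
      rw [Submodule.mkQ_apply, Submodule.Quotient.mk_eq_zero]
      constructor
      · intro h; exact ⟨⟨y.1, h⟩, rfl⟩
      · rintro ⟨z, rfl⟩; exact z.2
    · intro u x; rfl
    · intro u x; rfl

lemma main_aux (ψ : AddChar K ℂ) (hψlc : IsLocallyConstant (⇑ψ)) (hψne : ψ ≠ 1)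
    (ρ : Rep K V) (hρ : IsSmoothRep ρ) (c : CompSeries ρ)
    (χ : Kˣ →* ℂˣ) (hχ : SmoothMulChar χ) :
    HasIdx (ρ.comp xTHom) χ (c.deg (SRep ψ hψlc)) := by
  have hT := tsm_of_smooth ρ hρ
  have h := hasIdx_chain ψ hψlc hψne ρ hρ c χ hχ c.n le_rfl
  have hd : c.deg (SRep ψ hψlc) = ∑ j ∈ Finset.range c.n,
      if GRep.Iso (GRep.subquot ρ (c.inv j) (c.inv (j + 1))) (SRep ψ hψlc) then 1 else 0 := by
    rw [CompSeries.deg, Finset.card_filter, Finset.sum_range]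
  rw [hd]
  exact hasIdx_congr (tsm_sub ρ hT _) hT hχ
    ((LinearEquiv.ofEq _ _ c.top).trans Submodule.topEquiv) (fun u x => rfl) h

end Assembly2
section Statements

open Aff

variable {K : Type*} [NontriviallyNormedField K] [IsUltrametricDist K] [ProperSpace K]

theorem statement7
    (hchar : (2 : K) ≠ 0)
    (ψ : AddChar K ℂ) (hψlc : IsLocallyConstant (⇑ψ)) (hψne : ψ ≠ 1)
    {V : Type*} [AddCommGroup V] [Module ℂ V]
    (ρ : Rep K V) (hρ : IsSmoothRep ρ) (c : CompSeries ρ)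
    (χ : Kˣ →* ℂˣ) (hχ : SmoothMulChar χ) :
    Module.Finite ℂ (V ⧸ tTwistKer ρ χ) ∧ Module.Finite ℂ ↥(tEigen ρ χ) ∧
    Module.finrank ℂ (V ⧸ tTwistKer ρ χ)
      = Module.finrank ℂ ↥(tEigen ρ χ) + c.deg (SRep ψ hψlc) := by
  exact main_aux ψ hψlc hψne ρ hρ c χ hχ

end Statements

end PSW
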